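/- Let Ω = (0,1)×(−1,1). Then A ∩ SBV_∞(Ω;ℝ²) = {u ∈ SBV_∞(Ω;ℝ²) : u(x) = R(x₂)x + ψ(x₂) for a.e. x ∈ Ω, with R ∈ PC(−1,1;SO(2)) and ψ ∈ SBV_∞(−1,1;ℝ²) such that ψ'·Re₂ = 0 a.e. in (−1,1)}. In particular, for such u the jump sets J_R and J_ψ are finite sets of points in (−1,1), and J_u is a finite union of segments parallel to e₁. -/

import Mathlib

open MeasureTheory Set Filter Topology
open scoped ENNReal

noncomputable section

/-- We identify `ℝ²` with maps `Fin 2 → ℝ`; `x 0` is the `x₁` coordinate and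
`x 1` the `x₂` coordinate. -/
abbrev V2 := Fin 2 → ℝ

/-- `2 × 2` real matrices. -/
abbrev Mat2 := Matrix (Fin 2) (Fin 2) ℝ

/-- Proper rotations: `SO(2) = {R : R Rᵀ = 1, det R = 1}`. -/
def SO2 : Set Mat2 := {R | R * R.transpose = 1 ∧ R.det = 1}

def e1 : V2 := ![1, 0]
def e2 : V2 := ![0, 1]

/-- Euclidean norm on `ℝ²`. -/
def vnorm (v : V2) : ℝ := Real.sqrt (v 0 ^ 2 + v 1 ^ 2)

/-- Frobenius norm on `2 × 2` matrices. -/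
def mnorm (M : Mat2) : ℝ := Real.sqrt (∑ i, ∑ j, M i j ^ 2)

/-- Euclidean inner product on `ℝ²`. -/
def dot (v w : V2) : ℝ := ∑ i, v i * w i

/-- Tensor (outer) product `a ⊗ b = a bᵀ` of two vectors. -/
def outer (a b : V2) : Mat2 := Matrix.of fun i j => a i * b j

/-- Identification of `ℝ²` with the Euclidean space `EuclideanSpace ℝ (Fin 2)`. -/
def vToE (v : V2) : EuclideanSpace ℝ (Fin 2) := (EuclideanSpace.equiv (Fin 2) ℝ).symm v

/-- Identification of `2×2` matrices with `EuclideanSpace ℝ (Fin 2 × Fin 2)`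
(so that the induced norm is the Frobenius norm). -/
def mToE (M : Mat2) : EuclideanSpace ℝ (Fin 2 × Fin 2) :=
  (EuclideanSpace.equiv (Fin 2 × Fin 2) ℝ).symm fun p => M p.1 p.2

/-- A vector-valued function of one real variable has bounded variation on `s`
(with respect to the Euclidean norm). -/
def BVv (ψ : ℝ → V2) (s : Set ℝ) : Prop := BoundedVariationOn (fun t => vToE (ψ t)) s

/-- A matrix-valued function of one real variable has bounded variation on `s`
(with respect to the Frobenius norm). -/
def BVm (R : ℝ → Mat2) (s : Set ℝ) : Prop := BoundedVariationOn (fun t => mToE (R t)) s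

/-- Componentwise (a.e. pointwise) derivative of a vector-valued function of one variable.
For a one-dimensional `BV` function, the classical derivative exists a.e. and coincides with
the density of the absolutely continuous part of its distributional derivative
(the approximate derivative). -/
def vecDeriv (ψ : ℝ → V2) (t : ℝ) : V2 := fun i => deriv (fun s => ψ s i) t

/-- Componentwise derivative of a matrix-valued function of one variable. -/
def mDeriv (R : ℝ → Mat2) (t : ℝ) : Mat2 := Matrix.of fun i j => deriv (fun s => R s i j) t

/-- The rigid layers `ε Y_rig = {x : Int.fract (x₂/ε) ∈ [λ, 1)}` (1-periodic extension of
`[0,1) × [λ,1)`, scaled by `ε`). -/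
def rigid2 (lam ε : ℝ) : Set V2 := {x | lam ≤ Int.fract (x 1 / ε)}

/-- The one-dimensional rigid layers `ε I_rig`, where `I_rig` is the 1-periodic extension
of `[λ, 1)`. -/
def rigid1 (lam ε : ℝ) : Set ℝ := {t | lam ≤ Int.fract (t / ε)}

/-- `a_Ω = inf_{x ∈ Ω} x₂`. -/
def aOm (Ω : Set V2) : ℝ := sInf ((fun x : V2 => x 1) '' Ω)

/-- `b_Ω = sup_{x ∈ Ω} x₂`. -/
def bOm (Ω : Set V2) : ℝ := sSup ((fun x : V2 => x 1) '' Ω)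

/-- `Ω` is `x₁`-connected: every horizontal slice is a (possibly empty) interval. -/
def X1Connected (Ω : Set V2) : Prop := ∀ t : ℝ, OrdConnected {s : ℝ | ![s, t] ∈ Ω}

/-- A (nonempty) bounded Lipschitz domain: near every boundary point, after a rotation,
`Ω` is the region above the graph of a Lipschitz function. -/
def IsLipschitzDomain (Ω : Set V2) : Prop :=
  IsOpen Ω ∧ Ω.Nonempty ∧ Bornology.IsBounded Ω ∧
    ∀ x ∈ frontier Ω, ∃ Q ∈ SO2, ∃ L : NNReal, ∃ f : ℝ → ℝ, ∃ r : ℝ, 0 < r ∧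
      LipschitzWith L f ∧ ∀ y ∈ Metric.ball x r, (y ∈ Ω ↔ f (Q.mulVec y 0) < Q.mulVec y 1)

/-- Partial derivative `∂_j φ` of a scalar test function. -/
def pd (j : Fin 2) (φ : V2 → ℝ) (x : V2) : ℝ := fderiv ℝ φ x (Pi.single j 1)

/-- Componentwise integrability of a matrix-valued map. -/
def IntegrableOnM (g : V2 → Mat2) (Ω : Set V2) : Prop :=
  ∀ i j, IntegrableOn (fun x => g x i j) Ω volume

/-- `u ∈ W^{1,1}(Ω;ℝ²)` with weak gradient `gu`, expressed through integration by parts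
against smooth compactly supported test functions. -/
structure IsSobolev11On (Ω : Set V2) (u : V2 → V2) (gu : V2 → Mat2) : Prop where
  int_u : IntegrableOn u Ω volume
  int_gu : IntegrableOnM gu Ω
  ibp : ∀ φ : V2 → ℝ, ContDiff ℝ (⊤ : ℕ∞) φ → HasCompactSupport φ → tsupport φ ⊆ Ω →
    ∀ i j, ∫ x in Ω, u x i * pd j φ x = - ∫ x in Ω, φ x * gu x i j

/-- `u ∈ BV(Ω;ℝ²)`, with distributional derivative `Du = gu · L² + gs · σ`.
Here `gu` is the approximate differential (density of the absolutely continuous part),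
`σ = |D^s u|` is the total variation measure of the singular part (a finite measure,
concentrated on `Ω` and singular with respect to Lebesgue measure), and `gs` is the
polar density of the singular part, of unit Frobenius norm `σ`-a.e. -/
structure HasBVDerivOn (Ω : Set V2) (u : V2 → V2) (gu : V2 → Mat2)
    (σ : Measure V2) (gs : V2 → Mat2) : Prop where
  int_u : IntegrableOn u Ω volume
  int_gu : IntegrableOnM gu Ω
  fin : σ Set.univ ≠ ⊤
  conc : σ Ωᶜ = 0
  perp : σ ⟂ₘ (volume : Measure V2)
  meas_gs : ∀ i j, AEMeasurable (fun x => gs x i j) σ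
  unit : ∀ᵐ x ∂σ, mnorm (gs x) = 1
  ibp : ∀ φ : V2 → ℝ, ContDiff ℝ (⊤ : ℕ∞) φ → HasCompactSupport φ → tsupport φ ⊆ Ω →
    ∀ i j, ∫ x in Ω, u x i * pd j φ x
        = (- ∫ x in Ω, φ x * gu x i j) - ∫ x, φ x * gs x i j ∂σ

/-- `L¹(Ω;ℝ²)` convergence of a sequence. -/
def L1ConvOn (Ω : Set V2) (un : ℕ → V2 → V2) (u : V2 → V2) : Prop :=
  Tendsto (fun n => ∫ x in Ω, vnorm (un n x - u x)) atTop (𝓝 0)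

/-- Weak* convergence of the measures `gn n · L²∟Ω` to `gu · L²∟Ω + gs · σ`
in `M(Ω; ℝ^{2×2})`, tested against continuous functions compactly supported in `Ω`. -/
def MeasConv (Ω : Set V2) (gn : ℕ → V2 → Mat2) (gu : V2 → Mat2)
    (σ : Measure V2) (gs : V2 → Mat2) : Prop :=
  ∀ φ : V2 → ℝ, Continuous φ → HasCompactSupport φ → tsupport φ ⊆ Ω → ∀ i j,
    Tendsto (fun n => ∫ x in Ω, φ x * gn n x i j) atTop
      (𝓝 ((∫ x in Ω, φ x * gu x i j) + ∫ x, φ x * gs x i j ∂σ))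

/-- Weak* convergence in `BV(Ω;ℝ²)` of a sequence of `W^{1,1}` maps to a `BV` limit:
`L¹` convergence together with weak* convergence of the derivative measures. -/
def WeakStarToBV (Ω : Set V2) (un : ℕ → V2 → V2) (u : V2 → V2) : Prop :=
  ∃ gu σ gs, HasBVDerivOn Ω u gu σ gs ∧ L1ConvOn Ω un u ∧
    ∀ gn : ℕ → V2 → Mat2, (∀ n, IsSobolev11On Ω (un n) (gn n)) → MeasConv Ω gn gu σ gs

/-- `u ∈ A_ε`, witnessed by the data `R ∈ L^∞(Ω;SO(2))` and `γ ∈ L¹(Ω)`: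
`u ∈ W^{1,1}(Ω;ℝ²)` with `∇u = R (I + γ e₁⊗e₂)` a.e. and `γ = 0` a.e. on `εY_rig ∩ Ω`. -/
structure MemAeps (Ω : Set V2) (lam ε : ℝ) (u : V2 → V2)
    (R : V2 → Mat2) (γ : V2 → ℝ) : Prop where
  so2 : ∀ᵐ x ∂(volume.restrict Ω), R x ∈ SO2
  int_γ : IntegrableOn γ Ω volume
  sob : IsSobolev11On Ω u fun x => R x * (1 + γ x • outer e1 e2)
  rig : ∀ᵐ x ∂(volume.restrict (Ω ∩ rigid2 lam ε)), γ x = 0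

/-- The elastoplastic energy `E_ε(u) = ∫_Ω |γ| dx` for `u ∈ A_ε`, `∞` otherwise,
as an `ℝ≥0∞`-valued functional (the decomposition data is essentially unique). -/
def Eeps (Ω : Set V2) (lam ε : ℝ) (u : V2 → V2) : ℝ≥0∞ :=
  sInf {c | ∃ R γ, MemAeps Ω lam ε u R γ ∧ c = ∫⁻ x in Ω, ENNReal.ofReal |γ x|}

/-- `u ∈ A` relative to the vertical interval `(a, b)`:
`u ∈ BV(Ω;ℝ²)` with `u(x) = R(x₂)x + ψ(x₂)` a.e., `R ∈ BV(a,b;SO(2))`,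
`ψ ∈ BV(a,b;ℝ²)` and `det ∇u = 1` a.e. in `Ω`. -/
def memAOn (Ω : Set V2) (a b : ℝ) (u : V2 → V2) : Prop :=
  ∃ gu σ gs, HasBVDerivOn Ω u gu σ gs ∧
    (∃ R : ℝ → Mat2, ∃ ψ : ℝ → V2, (∀ t ∈ Ioo a b, R t ∈ SO2) ∧
      BVm R (Ioo a b) ∧ BVv ψ (Ioo a b) ∧
      ∀ᵐ x ∂(volume.restrict Ω), u x = (R (x 1)).mulVec x + ψ (x 1)) ∧
    ∀ᵐ x ∂(volume.restrict Ω), (gu x).det = 1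

/-- `u ∈ A`. -/
def memA (Ω : Set V2) (u : V2 → V2) : Prop := memAOn Ω (aOm Ω) (bOm Ω) u

/-- `u ∈ A∥` relative to the vertical interval `(a,b)`:
`u(x) = Rx + ϑ(x₂) R e₁ + c` a.e. with a constant rotation `R ∈ SO(2)`,
`ϑ ∈ BV(a,b)` and `c ∈ ℝ²`. -/
def memAparOn (Ω : Set V2) (a b : ℝ) (u : V2 → V2) : Prop :=
  ∃ R ∈ SO2, ∃ ϑ : ℝ → ℝ, ∃ c : V2, BoundedVariationOn ϑ (Ioo a b) ∧
    ∀ᵐ x ∂(volume.restrict Ω), u x = R.mulVec x + ϑ (x 1) • R.mulVec e1 + c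

/-- `u ∈ A∥`. -/
def memApar (Ω : Set V2) (u : V2 → V2) : Prop := memAparOn Ω (aOm Ω) (bOm Ω) u

/-- The limit energy `E(u) = ∫_Ω |ψ'·Re₁| dx + |D^s u|(Ω)` for `u ∈ A`, `∞` otherwise. -/
def Efun (Ω : Set V2) (u : V2 → V2) : ℝ≥0∞ :=
  sInf {c | ∃ gu σ gs, HasBVDerivOn Ω u gu σ gs ∧
    ∃ R : ℝ → Mat2, ∃ ψ : ℝ → V2,
      (∀ t ∈ Ioo (aOm Ω) (bOm Ω), R t ∈ SO2) ∧ BVm R (Ioo (aOm Ω) (bOm Ω)) ∧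
      BVv ψ (Ioo (aOm Ω) (bOm Ω)) ∧
      (∀ᵐ x ∂(volume.restrict Ω), u x = (R (x 1)).mulVec x + ψ (x 1)) ∧
      (∀ᵐ x ∂(volume.restrict Ω), (gu x).det = 1) ∧
      c = (∫⁻ x in Ω, ENNReal.ofReal |dot (vecDeriv ψ (x 1)) ((R (x 1)).mulVec e1)|)
          + σ Set.univ}

/-- The limit energy on `A∥`: `E(u) = ∫_Ω |ϑ'(x₂)| dx + |D^s u|(Ω)` for `u ∈ A∥`,
`∞` otherwise. -/
def EparFun (Ω : Set V2) (u : V2 → V2) : ℝ≥0∞ :=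
  sInf {c | ∃ gu σ gs, HasBVDerivOn Ω u gu σ gs ∧
    ∃ R ∈ SO2, ∃ ϑ : ℝ → ℝ, ∃ c0 : V2, BoundedVariationOn ϑ (Ioo (aOm Ω) (bOm Ω)) ∧
      (∀ᵐ x ∂(volume.restrict Ω), u x = R.mulVec x + ϑ (x 1) • R.mulVec e1 + c0) ∧
      c = (∫⁻ x in Ω, ENNReal.ofReal |deriv ϑ (x 1)|) + σ Set.univ}

/-- The regularized limit energy `E^δ(u) = ∫_Ω |ϑ'| dx + |D^s u|(Ω) + δ|Ω|` on `A∥`,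
`∞` otherwise. -/
def EDelta (Ω : Set V2) (δ : ℝ) (u : V2 → V2) : ℝ≥0∞ :=
  EparFun Ω u + ENNReal.ofReal δ * volume Ω

/-- `‖v‖_{W^{1,p}(Ω;ℝ²)}^p = ∫_Ω |v|^p + ∫_Ω |Dv|^p` for a map `v` with weak Jacobian `G`. -/
def Wp1 (p : ℝ) (Ω : Set V2) (v : V2 → V2) (G : V2 → Mat2) : ℝ≥0∞ :=
  (∫⁻ x in Ω, ENNReal.ofReal (vnorm (v x) ^ p)) + ∫⁻ x in Ω, ENNReal.ofReal (mnorm (G x) ^ p)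

/-- The regularized energy
`E^δ_ε(u) = ∫_Ω |γ| dx + δ ‖∂₁ u‖_{W^{1,p}(Ω;ℝ²)}^p` for `u ∈ A_ε` with
`∂₁u = R e₁ ∈ W^{1,p}(Ω;ℝ²)`, and `∞` otherwise. -/
def EepsDelta (Ω : Set V2) (lam ε δ p : ℝ) (u : V2 → V2) : ℝ≥0∞ :=
  sInf {c | ∃ R γ, MemAeps Ω lam ε u R γ ∧
    ∃ G : V2 → Mat2, IsSobolev11On Ω (fun x => (R x).mulVec e1) G ∧
      c = (∫⁻ x in Ω, ENNReal.ofReal |γ x|) +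
          ENNReal.ofReal δ * Wp1 p Ω (fun x => (R x).mulVec e1) G}

/-- `x` is an approximate jump point of `u`, with one-sided approximate limits `a ≠ b`
relative to a unit normal `ν`. -/
def JumpPt (u : V2 → V2) (x : V2) : Prop :=
  ∃ a b ν : V2, a ≠ b ∧ vnorm ν = 1 ∧
    Tendsto (fun r : ℝ =>
        (∫⁻ z in {z | z ∈ Metric.ball x r ∧ 0 < dot (z - x) ν},
            ENNReal.ofReal (vnorm (u z - a))) / volume (Metric.ball x r))
      (𝓝[>] 0) (𝓝 0) ∧
    Tendsto (fun r : ℝ =>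
        (∫⁻ z in {z | z ∈ Metric.ball x r ∧ dot (z - x) ν < 0},
            ENNReal.ofReal (vnorm (u z - b))) / volume (Metric.ball x r))
      (𝓝[>] 0) (𝓝 0)

/-- The jump set `J_u` of `u` in `Ω`. -/
def jumpSet (Ω : Set V2) (u : V2 → V2) : Set V2 := {x ∈ Ω | JumpPt u x}

/-- `u ∈ SBV_∞(Ω;ℝ²)`: `u ∈ BV` with singular part concentrated on the jump set
(no Cantor part), `∇u ∈ L^∞(Ω;ℝ^{2×2})` and `H¹(J_u) < ∞`. -/
def memSBVinf (Ω : Set V2) (u : V2 → V2) : Prop :=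
  ∃ gu σ gs, HasBVDerivOn Ω u gu σ gs ∧
    σ {x | ¬ JumpPt u x} = 0 ∧
    (∃ M : ℝ, ∀ᵐ x ∂(volume.restrict Ω), mnorm (gu x) ≤ M) ∧
    Measure.hausdorffMeasure (1 : ℝ) (jumpSet Ω u) ≠ ⊤

/-- Piecewise constant functions on `(a,b)` with finitely many jumps
(the class `PC(a,b)`). -/
def PCOn {α : Type*} (a b : ℝ) (f : ℝ → α) : Prop :=
  ∃ S : Finset ℝ, ∀ s₁ ∈ Ioo a b, ∀ s₂ ∈ Ioo a b, s₁ ≤ s₂ →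
    (∀ r ∈ S, r ∉ Icc s₁ s₂) → f s₁ = f s₂

/-- Piecewise Lipschitz functions on `(a,b)` with finitely many jump points:
the class `SBV_∞(a,b;ℝ²)` of one-dimensional special functions of bounded variation
with bounded derivative and finitely many jumps. -/
def PLipOn (a b : ℝ) (f : ℝ → V2) : Prop :=
  ∃ S : Finset ℝ, ∃ L : ℝ, 0 ≤ L ∧ ∀ s₁ ∈ Ioo a b, ∀ s₂ ∈ Ioo a b, s₁ ≤ s₂ →
    (∀ r ∈ S, r ∉ Icc s₁ s₂) → vnorm (f s₂ - f s₁) ≤ L * (s₂ - s₁)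

/-- The rectangle `Ω = (0,1) × (−1,1)`. -/
def Rect : Set V2 := {x | x 0 ∈ Ioo (0:ℝ) 1 ∧ x 1 ∈ Ioo (-1:ℝ) 1}

/-- `f ∈ W^{1,1}(a,b)`: `f` has an integrable weak derivative on `(a,b)`
(absolutely continuous representative). -/
def IsW11On (f : ℝ → ℝ) (a b : ℝ) : Prop :=
  ∃ g : ℝ → ℝ, IntegrableOn g (Ioo a b) volume ∧
    ∀ s ∈ Ioo a b, ∀ t ∈ Ioo a b, f t - f s = ∫ r in s..t, g r

/-!
On each horizontal line `u(x) = R(x₂) x + ψ(x₂)` is affine in `x₁`, with slope `R e₁` and intercept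
`x₂ R e₂ + ψ`, and this profile has a càdlàg representative. Where the profile is discontinuous, `u`
jumps along a whole horizontal segment up to one point, so finiteness of `H¹(J_u)` leaves only
finitely many discontinuities. Away from those heights `Du` has no singular part, and the bound on
`∇u` makes the profile Lipschitz.

Write `a = R e₁` and `b = x₂ R e₂ + ψ`. The Jacobian determinant of `u` is `x₁ (a × a') + a × b'`.
For it to be `1` for almost every `x₁`, we need `a × a' = 0` and `a × b' = 1`. Since `|a| = 1` gives
`a · a' = 0`, the first identity forces `a' = 0`, hence `R` is piecewise constant; then
`a × b' = 1 + ψ' · R e₂`, so the second identity is `ψ' · R e₂ = 0`.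
-/

section EuclideanPlane

theorem vnorm_eq_norm_vToE (v : V2) : vnorm v = ‖vToE v‖ := by
  simp [vnorm, vToE, EuclideanSpace.norm_eq, Fin.sum_univ_two]

theorem continuous_vnorm : Continuous vnorm := by
  unfold vnorm; fun_prop

theorem vnorm_zero : vnorm 0 = 0 := by simp [vnorm]

theorem vnorm_eq_zero {v : V2} : vnorm v = 0 ↔ v = 0 := by
  rw [vnorm_eq_norm_vToE, norm_eq_zero, vToE, EmbeddingLike.map_eq_zero_iff]

theorem abs_le_vnorm (v : V2) (i : Fin 2) : |v i| ≤ vnorm v := by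
  rw [vnorm_eq_norm_vToE]
  exact PiLp.norm_apply_le (vToE v) i

theorem norm_le_vnorm (v : V2) : ‖v‖ ≤ vnorm v :=
  (pi_norm_le_iff_of_nonneg (Real.sqrt_nonneg _)).2 (abs_le_vnorm v)

theorem vnorm_le_two_mul_norm (v : V2) : vnorm v ≤ 2 * ‖v‖ := by
  refine Real.sqrt_le_iff.2 ⟨by positivity, ?_⟩
  have entry_sq_le (i : Fin 2) : v i ^ 2 ≤ ‖v‖ ^ 2 :=
    sq_le_sq' (neg_le_of_abs_le (norm_le_pi_norm v i)) (le_of_abs_le (norm_le_pi_norm v i))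
  linarith [entry_sq_le 0, entry_sq_le 1, sq_nonneg ‖v‖]

theorem abs_entry_le_mnorm (A : Mat2) (i j : Fin 2) : |A i j| ≤ mnorm A := by
  refine Real.abs_le_sqrt ?_
  exact (Finset.single_le_sum (f := fun j => A i j ^ 2) (fun _ _ => sq_nonneg _)
    (Finset.mem_univ j)).trans (Finset.single_le_sum (f := fun i => ∑ j, A i j ^ 2)
    (fun _ _ => Finset.sum_nonneg fun _ _ => sq_nonneg _) (Finset.mem_univ i))

theorem entries_of_mem_SO2 {R : Mat2} (hR : R ∈ SO2) :
    R 0 1 = -R 1 0 ∧ R 1 1 = R 0 0 ∧ R 0 0 ^ 2 + R 1 0 ^ 2 = 1 := by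
  obtain ⟨orthogonal, det_one⟩ := hR
  have row₀ : R 0 0 * R 0 0 + R 0 1 * R 0 1 = 1 := by
    simpa [Matrix.mul_apply] using congr_fun₂ orthogonal 0 0
  have row₁ : R 1 0 * R 1 0 + R 1 1 * R 1 1 = 1 := by
    simpa [Matrix.mul_apply] using congr_fun₂ orthogonal 1 1
  rw [Matrix.det_fin_two] at det_one
  have h₁ : R 1 1 = R 0 0 := by nlinarith [sq_nonneg (R 0 0 - R 1 1), sq_nonneg (R 0 1 + R 1 0)]
  have h₂ : R 0 1 = -R 1 0 := by nlinarith [sq_nonneg (R 0 0 - R 1 1), sq_nonneg (R 0 1 + R 1 0)]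
  refine ⟨h₂, h₁, ?_⟩
  rw [h₂] at row₀
  linarith

theorem isClosed_SO2 : IsClosed SO2 :=
  (isClosed_eq (by fun_prop) continuous_const).inter (isClosed_eq (by fun_prop) continuous_const)

theorem abs_entry_le_one_of_mem_SO2 {R : Mat2} (hR : R ∈ SO2) (i j : Fin 2) : |R i j| ≤ 1 := by
  obtain ⟨h₁, h₂, h₃⟩ := entries_of_mem_SO2 hR
  refine abs_le_one_iff_mul_self_le_one.2 ?_
  fin_cases i <;> fin_cases j <;> simp only [Fin.zero_eta, Fin.mk_one, h₁, h₂] <;> nlinarith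

/-- The planar cross product: the determinant of the matrix with columns `v` and `w`. It is used to
write Jacobian determinants in terms of the columns of the gradient. -/
def cross (v w : V2) : ℝ := v 0 * w 1 - v 1 * w 0

theorem cross_mulVec_e1_of_mem_SO2 {R : Mat2} (hR : R ∈ SO2) (w : V2) :
    cross (R.mulVec e1) w = dot w (R.mulVec e2) := by
  obtain ⟨h₁, h₂, -⟩ := entries_of_mem_SO2 hR
  simp only [cross, dot, e1, e2, Matrix.mulVec, dotProduct, Fin.sum_univ_two,
    Matrix.cons_val_zero, Matrix.cons_val_one, h₁, h₂]
  ring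

end EuclideanPlane

section Cadlag

variable {X Y : Type*} [TopologicalSpace X] [TopologicalSpace Y]

/-- Càdlàg functions on a set `s` of times: right-continuous at the points of `s`, with a left
limit there. -/
def CadlagOn (f : ℝ → X) (s : Set ℝ) : Prop :=
  ∀ t ∈ s, Tendsto f (𝓝[>] t) (𝓝 (f t)) ∧ ∃ l, Tendsto f (𝓝[<] t) (𝓝 l)

theorem CadlagOn.prodMk {f : ℝ → X} {g : ℝ → Y} {s : Set ℝ} (hf : CadlagOn f s)
    (hg : CadlagOn g s) : CadlagOn (fun t => (f t, g t)) s := fun t ht =>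
  let ⟨l, hl⟩ := (hf t ht).2
  let ⟨m, hm⟩ := (hg t ht).2
  ⟨(hf t ht).1.prodMk_nhds (hg t ht).1, (l, m), hl.prodMk_nhds hm⟩

theorem CadlagOn.continuous_comp {f : ℝ → X} {s : Set ℝ} {g : X → Y} (hg : Continuous g)
    (hf : CadlagOn f s) : CadlagOn (fun t => g (f t)) s := fun t ht =>
  let ⟨l, hl⟩ := (hf t ht).2
  ⟨(hg.tendsto _).comp (hf t ht).1, g l, (hg.tendsto _).comp hl⟩

theorem cadlagOn_of_continuous {f : ℝ → X} (hf : Continuous f) (s : Set ℝ) : CadlagOn f s :=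
  fun t _ => ⟨hf.continuousWithinAt, f t, hf.continuousWithinAt⟩

theorem CadlagOn.continuousAt_of_tendsto_left {f : ℝ → X} {s : Set ℝ} (hf : CadlagOn f s) {t : ℝ}
    (ht : t ∈ s) (hleft : Tendsto f (𝓝[<] t) (𝓝 (f t))) : ContinuousAt f t :=
  continuousAt_iff_continuous_left'_right'.2 ⟨hleft, (hf t ht).1⟩

theorem tendsto_rightLim_of_boundedVariationOn {E : Type*} [EMetricSpace E] [CompleteSpace E]
    {f : ℝ → E} {s : Set ℝ} (hf : BoundedVariationOn f s) (hs : IsOpen s) {t : ℝ} (ht : t ∈ s) :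
    Tendsto f (𝓝[>] t) (𝓝 (Function.rightLim f t)) := by
  refine tendsto_rightLim_of_tendsto ?_
  have hright := hf.exists_tendsto_right t
  rwa [nhdsWithin_inter_of_mem (mem_nhdsWithin_of_mem_nhds (hs.mem_nhds ht))] at hright

theorem cadlagOn_rightLim {E : Type*} [EMetricSpace E] [CompleteSpace E] {f : ℝ → E} {s : Set ℝ}
    (hf : BoundedVariationOn f s) (hs : IsOpen s) : CadlagOn (Function.rightLim f) s := by
  intro t ht
  have bounded_rightLim : BoundedVariationOn (Function.rightLim f) s :=
    ((eVariationOn.eVariationOn_rightLim_le hs).trans_lt hf.lt_top).ne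
  have hleft := bounded_rightLim.exists_tendsto_left t
  rw [nhdsWithin_inter_of_mem (mem_nhdsWithin_of_mem_nhds (hs.mem_nhds ht))] at hleft
  have hright := continuousWithinAt_rightLim_Ici (tendsto_rightLim_of_boundedVariationOn hf hs ht)
  exact ⟨hright.mono_left (nhdsWithin_mono t Ioi_subset_Ici_self), hleft⟩

theorem exists_cadlagOn_ae_eq {E : Type*} [NormedAddCommGroup E] [NormedSpace ℝ E]
    [FiniteDimensional ℝ E] {f : ℝ → E} {s : Set ℝ} (hf : BoundedVariationOn f s) (hs : IsOpen s)
    {K : Set E} (hK : IsClosed K) (hfK : MapsTo f s K) :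
    ∃ g : ℝ → E, CadlagOn g s ∧ MapsTo g s K ∧ ∀ᵐ t ∂(volume.restrict s), g t = f t := by
  have : CompleteSpace E := FiniteDimensional.complete ℝ E
  refine ⟨Function.rightLim f, cadlagOn_rightLim hf hs, fun t ht => ?_, ?_⟩
  · refine hK.mem_of_tendsto (tendsto_rightLim_of_boundedVariationOn hf hs ht) ?_
    filter_upwards [mem_nhdsWithin_of_mem_nhds (hs.mem_nhds ht)] with r hr using hfK hr
  · rw [ae_restrict_iff' hs.measurableSet]
    filter_upwards [hf.locallyBoundedVariationOn.ae_differentiableWithinAt_of_mem] with t hdiff ht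
    exact ((hdiff ht).differentiableAt (hs.mem_nhds ht)).continuousAt.continuousWithinAt.rightLim_eq

theorem exists_cadlagOn_SO2_ae_eq {R : ℝ → Mat2} {s : Set ℝ} (hs : IsOpen s)
    (hR : BVm R s) (hRSO : ∀ t ∈ s, R t ∈ SO2) :
    ∃ Q : ℝ → Mat2, CadlagOn Q s ∧ (∀ t ∈ s, Q t ∈ SO2) ∧
      ∀ᵐ t ∂(volume.restrict s), Q t = R t := by
  let toMat (p : EuclideanSpace ℝ (Fin 2 × Fin 2)) : Mat2 := Matrix.of fun i j => p (i, j)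
  have toMat_continuous : Continuous toMat := continuous_matrix fun i j => by
    simp only [toMat, Matrix.of_apply]; fun_prop
  obtain ⟨g, g_cadlag, g_mem, g_eq⟩ := exists_cadlagOn_ae_eq hR hs
    (isClosed_SO2.preimage toMat_continuous) hRSO
  refine ⟨fun t => toMat (g t), g_cadlag.continuous_comp toMat_continuous, g_mem, ?_⟩
  filter_upwards [g_eq] with t ht
  rw [ht]
  rfl

theorem exists_cadlagOn_V2_ae_eq {ψ : ℝ → V2} {s : Set ℝ} (hs : IsOpen s) (hψ : BVv ψ s) :
    ∃ φ : ℝ → V2, CadlagOn φ s ∧ ∀ᵐ t ∂(volume.restrict s), φ t = ψ t := by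
  obtain ⟨g, g_cadlag, -, g_eq⟩ := exists_cadlagOn_ae_eq hψ hs isClosed_univ (mapsTo_univ _ _)
  refine ⟨fun t => (g t).ofLp, g_cadlag.continuous_comp (PiLp.continuous_ofLp 2 _), ?_⟩
  filter_upwards [g_eq] with t ht
  rw [ht]
  rfl

end Cadlag

section JumpPoints

theorem abs_dot_le (v w : V2) : |dot v w| ≤ vnorm v * vnorm w := by
  have h := abs_real_inner_le_norm (vToE v) (vToE w)
  rw [← vnorm_eq_norm_vToE, ← vnorm_eq_norm_vToE] at h
  simpa [vToE, PiLp.inner_apply, dot, mul_comm] using h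

theorem dot_self (v : V2) : dot v v = vnorm v ^ 2 := by
  rw [vnorm, Real.sq_sqrt (by positivity), dot, Fin.sum_univ_two, ← sq, ← sq]

theorem continuous_dot_sub (x ν : V2) : Continuous fun z => dot (z - x) ν := by
  unfold dot; fun_prop

/-- The open half-plane `{z : (z - x) · ν > 0}` on the side of `x` to which `ν` points. -/
def halfPlane (x ν : V2) : Set V2 := {z | 0 < dot (z - x) ν}

theorem measurableSet_halfPlane (x ν : V2) : MeasurableSet (halfPlane x ν) :=
  (isOpen_lt continuous_const (continuous_dot_sub x ν)).measurableSet

/-- `a` is the approximate limit of `u` at `x` along `H`, in the averaged `L¹` sense used in the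
definition of jump points. -/
def ApproxLimWithin (u : V2 → V2) (H : Set V2) (x a : V2) : Prop :=
  Tendsto (fun r : ℝ =>
    (∫⁻ z in {z | z ∈ Metric.ball x r ∧ z ∈ H}, ENNReal.ofReal (vnorm (u z - a))) /
      volume (Metric.ball x r)) (𝓝[>] 0) (𝓝 0)

theorem jumpPt_iff {u : V2 → V2} {x : V2} :
    JumpPt u x ↔ ∃ a b ν : V2, a ≠ b ∧ vnorm ν = 1 ∧
      ApproxLimWithin u (halfPlane x ν) x a ∧ ApproxLimWithin u (halfPlane x (-ν)) x b := by
  have neg_side (ν z : V2) : 0 < dot (z - x) (-ν) ↔ dot (z - x) ν < 0 := by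
    rw [show dot (z - x) (-ν) = -dot (z - x) ν by simp [dot, add_comm], neg_pos]
  simp only [JumpPt, ApproxLimWithin, halfPlane, mem_ofPred_eq, neg_side]

theorem eventually_forall_mem_ball {X : Type*} [PseudoMetricSpace X] {x : X} {p : X → Prop}
    (hp : ∀ᶠ z in 𝓝 x, p z) : ∀ᶠ r in 𝓝[>] (0 : ℝ), ∀ z ∈ Metric.ball x r, p z := by
  obtain ⟨ε, hε, hball⟩ := Metric.eventually_nhds_iff_ball.1 hp
  filter_upwards [Ioo_mem_nhdsGT hε] with r hr z hz
  exact hball z (Metric.ball_subset_ball hr.2.le hz)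

variable {u v : V2 → V2} {Ω : Set V2} {x : V2}

theorem approxLimWithin_of_tendsto (hΩ : IsOpen Ω) (hx : x ∈ Ω)
    (huv : ∀ᵐ z ∂(volume.restrict Ω), u z = v z) {H : Set V2} (hH : MeasurableSet H) {a : V2}
    (hv : Tendsto v (𝓝[H] x) (𝓝 a)) : ApproxLimWithin u H x a := by
  refine ENNReal.tendsto_nhds_zero.2 fun ε hε => ?_
  have deviation_tendsto :
      Tendsto (fun z => ENNReal.ofReal (vnorm (v z - a))) (𝓝[H] x) (𝓝 0) := by
    have h := (ENNReal.continuous_ofReal.comp continuous_vnorm).tendsto (a - a)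
    simpa [vnorm_zero, Function.comp_def] using h.comp (hv.sub_const a)
  have deviation_le := eventually_nhdsWithin_iff.1 (deviation_tendsto.eventually_le_const hε)
  filter_upwards [eventually_forall_mem_ball (deviation_le.and (hΩ.mem_nhds hx))] with r hr
  have hset : MeasurableSet {z | z ∈ Metric.ball x r ∧ z ∈ H} := measurableSet_ball.inter hH
  refine ENNReal.div_le_of_le_mul ?_
  calc ∫⁻ z in {z | z ∈ Metric.ball x r ∧ z ∈ H}, ENNReal.ofReal (vnorm (u z - a))
      ≤ ∫⁻ _ in {z | z ∈ Metric.ball x r ∧ z ∈ H}, ε := by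
        refine setLIntegral_mono_ae' hset ?_
        filter_upwards [(ae_restrict_iff' hΩ.measurableSet).1 huv] with z hz hzs
        rw [hz (hr z hzs.1).2]
        exact (hr z hzs.1).1 hzs.2
    _ = ε * volume {z | z ∈ Metric.ball x r ∧ z ∈ H} := setLIntegral_const _ _
    _ ≤ ε * volume (Metric.ball x r) := by gcongr; exact fun z hz => hz.1

theorem ball_subset_ball_inter_halfPlane {ν : V2} (hν : vnorm ν = 1) (r : ℝ) :
    Metric.ball (x + (r / 2) • ν) (r / 4) ⊆ {z | z ∈ Metric.ball x r ∧ z ∈ halfPlane x ν} := by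
  intro z hz
  rw [mem_ball_iff_norm] at hz
  have hr : 0 < r := by linarith [(norm_nonneg _).trans_lt hz]
  refine ⟨mem_ball_iff_norm.2 ?_, ?_⟩
  · calc ‖z - x‖ = ‖(z - (x + (r / 2) • ν)) + (r / 2) • ν‖ := by congr 1; abel
      _ ≤ ‖z - (x + (r / 2) • ν)‖ + (r / 2) * ‖ν‖ := by
        grw [norm_add_le, norm_smul, Real.norm_of_nonneg (by positivity)]
      _ < r := by nlinarith [norm_le_vnorm ν]
  · have hsplit : dot (z - x) ν = dot (z - (x + (r / 2) • ν)) ν + r / 2 := by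
      have h := dot_self ν
      rw [hν] at h
      simp only [dot, Fin.sum_univ_two, Pi.sub_apply, Pi.add_apply, Pi.smul_apply,
        smul_eq_mul] at h ⊢
      linear_combination (r / 2) * h
    have hsmall := neg_le_of_abs_le (abs_dot_le (z - (x + (r / 2) • ν)) ν)
    rw [hν, mul_one] at hsmall
    rw [halfPlane, mem_ofPred_eq, hsplit]
    linarith [vnorm_le_two_mul_norm (z - (x + (r / 2) • ν))]

theorem volume_ball_le_volume_ball_inter_halfPlane {ν : V2} (hν : vnorm ν = 1) {r : ℝ}
    (hr : 0 < r) :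
    volume (Metric.ball x r) ≤ 16 * volume {z | z ∈ Metric.ball x r ∧ z ∈ halfPlane x ν} := by
  calc volume (Metric.ball x r) = 16 * volume (Metric.ball (x + (r / 2) • ν) (r / 4)) := by
        rw [Real.volume_pi_ball _ hr, Real.volume_pi_ball _ (by positivity),
          ← ENNReal.ofReal_ofNat 16, ← ENNReal.ofReal_mul (by norm_num)]
        congr 1
        simp only [Fintype.card_fin]
        ring
    _ ≤ _ := by grw [ball_subset_ball_inter_halfPlane hν r]

theorem eq_of_approxLimWithin_halfPlane (hΩ : IsOpen Ω) (hx : x ∈ Ω)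
    (huv : ∀ᵐ z ∂(volume.restrict Ω), u z = v z) (hv : ContinuousAt v x) {a ν : V2}
    (hν : vnorm ν = 1) (ha : ApproxLimWithin u (halfPlane x ν) x a) : a = v x := by
  by_contra hne
  have hgap : 0 < ENNReal.ofReal (vnorm (v x - a)) :=
    ENNReal.ofReal_pos.2 ((Real.sqrt_nonneg _).lt_of_ne fun h =>
      hne (sub_eq_zero.1 (vnorm_eq_zero.1 h.symm)).symm)
  obtain ⟨δ, hδ, hδgap⟩ := exists_between hgap
  have deviation_continuousAt : ContinuousAt (fun z => ENNReal.ofReal (vnorm (v z - a))) x :=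
    (ENNReal.continuous_ofReal.comp continuous_vnorm).continuousAt.comp (hv.sub_const a)
  have deviation_ge := deviation_continuousAt.eventually_const_le hδgap
  have average_ge : ∀ᶠ r in 𝓝[>] (0 : ℝ), δ / 16 ≤
      (∫⁻ z in {z | z ∈ Metric.ball x r ∧ z ∈ halfPlane x ν}, ENNReal.ofReal (vnorm (u z - a))) /
        volume (Metric.ball x r) := by
    filter_upwards [eventually_forall_mem_ball (deviation_ge.and (hΩ.mem_nhds hx)),
      self_mem_nhdsWithin] with r hr hrpos
    rw [ENNReal.le_div_iff_mul_le (.inl (Metric.measure_ball_pos _ _ hrpos).ne')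
      (.inl measure_ball_lt_top.ne)]
    calc δ / 16 * volume (Metric.ball x r)
        ≤ δ / 16 * (16 * volume {z | z ∈ Metric.ball x r ∧ z ∈ halfPlane x ν}) := by
          grw [volume_ball_le_volume_ball_inter_halfPlane hν hrpos]
      _ = ∫⁻ _ in {z | z ∈ Metric.ball x r ∧ z ∈ halfPlane x ν}, δ := by
          rw [setLIntegral_const, ← mul_assoc, ENNReal.div_mul_cancel (by simp) (by simp)]
      _ ≤ _ := by
          refine setLIntegral_mono_ae' (measurableSet_ball.inter (measurableSet_halfPlane x ν)) ?_
          filter_upwards [(ae_restrict_iff' hΩ.measurableSet).1 huv] with z hz hzs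
          rw [hz (hr z hzs.1).2]
          exact (hr z hzs.1).1
  exact (ENNReal.div_pos hδ.ne' (by simp)).not_ge (ge_of_tendsto ha average_ge)

theorem not_jumpPt_of_continuousAt (hΩ : IsOpen Ω) (hx : x ∈ Ω)
    (huv : ∀ᵐ z ∂(volume.restrict Ω), u z = v z) (hv : ContinuousAt v x) : ¬ JumpPt u x := by
  rw [jumpPt_iff]
  rintro ⟨a, b, ν, hab, hν, ha, hb⟩
  have hν' : vnorm (-ν) = 1 := by simpa [vnorm] using hν
  exact hab ((eq_of_approxLimWithin_halfPlane hΩ hx huv hv hν ha).trans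
    (eq_of_approxLimWithin_halfPlane hΩ hx huv hv hν' hb).symm)

end JumpPoints

section HorizontallyAffine

/-- The open box `(c, d) × (a, b)`. -/
def openBox (c d a b : ℝ) : Set V2 := {x | x 0 ∈ Ioo c d ∧ x 1 ∈ Ioo a b}

theorem isOpen_openBox (c d a b : ℝ) : IsOpen (openBox c d a b) :=
  (isOpen_Ioo.preimage (continuous_apply 0)).inter (isOpen_Ioo.preimage (continuous_apply 1))

theorem ae_restrict_comp_apply {ι : Type*} [Fintype ι] {Ω : Set (ι → ℝ)} {s : Set ℝ} {i : ι}
    (hΩ : MapsTo (fun x => x i) Ω s) {p : ℝ → Prop} (hp : ∀ᵐ t ∂(volume.restrict s), p t) :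
    ∀ᵐ x ∂(volume.restrict Ω), p (x i) :=
  ((Measure.quasiMeasurePreserving_eval (fun _ : ι => (volume : Measure ℝ)) i).restrict hΩ).ae hp

/-- The map which on the horizontal line at height `t` is affine in `x₁`, with slope `(f t).1` and
intercept `(f t).2`. -/
def horizAffine (f : ℝ → V2 × V2) (x : V2) : V2 := x 0 • (f (x 1)).1 + (f (x 1)).2

/-- Slope and intercept, as functions of the height, of the map `x ↦ R(x₂) x + ψ(x₂)`. -/
def profile (R : ℝ → Mat2) (ψ : ℝ → V2) (t : ℝ) : V2 × V2 :=
  ((R t).mulVec e1, t • (R t).mulVec e2 + ψ t)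

theorem horizAffine_profile (R : ℝ → Mat2) (ψ : ℝ → V2) (x : V2) :
    horizAffine (profile R ψ) x = (R (x 1)).mulVec x + ψ (x 1) := by
  have decompose : x = x 0 • e1 + x 1 • e2 := by
    ext i; fin_cases i <;> simp [e1, e2]
  conv_rhs => rw [decompose, Matrix.mulVec_add, Matrix.mulVec_smul, Matrix.mulVec_smul]
  simp [horizAffine, profile, e1, e2, add_assoc]

theorem cadlagOn_profile {R : ℝ → Mat2} {ψ : ℝ → V2} {s : Set ℝ} (hR : CadlagOn R s)
    (hψ : CadlagOn ψ s) : CadlagOn (profile R ψ) s := by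
  have continuous_assemble : Continuous fun p : ℝ × Mat2 × V2 =>
      (p.2.1.mulVec e1, p.1 • p.2.1.mulVec e2 + p.2.2) := by fun_prop
  have h := ((cadlagOn_of_continuous continuous_id s).prodMk (hR.prodMk hψ)).continuous_comp
    continuous_assemble
  exact h

theorem tendsto_horizAffine {f : ℝ → V2 × V2} {x : V2} {s : Set ℝ} {l : V2 × V2}
    (hf : Tendsto f (𝓝[s] (x 1)) (𝓝 l)) :
    Tendsto (horizAffine f) (𝓝[{z | z 1 ∈ s}] x) (𝓝 (x 0 • l.1 + l.2)) := by
  have height_tendsto : Tendsto (fun z : V2 => z 1) (𝓝[{z | z 1 ∈ s}] x) (𝓝[s] (x 1)) :=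
    (continuous_apply 1).continuousWithinAt.tendsto_nhdsWithin fun _ hz => hz
  have abscissa_tendsto : Tendsto (fun z : V2 => z 0) (𝓝[{z | z 1 ∈ s}] x) (𝓝 (x 0)) :=
    (continuous_apply 0).continuousWithinAt
  have hlim := hf.comp height_tendsto
  exact (abscissa_tendsto.smul hlim.fst_nhds).add hlim.snd_nhds

theorem continuousAt_horizAffine {f : ℝ → V2 × V2} {x : V2} (hf : ContinuousAt f (x 1)) :
    ContinuousAt (horizAffine f) x := by
  have h := tendsto_horizAffine (x := x) (s := univ) (hf.mono_left nhdsWithin_le_nhds)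
  rwa [show {z : V2 | z 1 ∈ univ} = univ from rfl, nhdsWithin_univ] at h

variable {u : V2 → V2} {Ω : Set V2} {f : ℝ → V2 × V2} {x : V2}

theorem jumpPt_of_tendsto_horizAffine_ne (hΩ : IsOpen Ω) (hx : x ∈ Ω)
    (hu : ∀ᵐ z ∂(volume.restrict Ω), u z = horizAffine f z) {l r : V2 × V2}
    (hl : Tendsto f (𝓝[<] (x 1)) (𝓝 l)) (hr : Tendsto f (𝓝[>] (x 1)) (𝓝 r))
    (hne : x 0 • r.1 + r.2 ≠ x 0 • l.1 + l.2) : JumpPt u x := by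
  have above : halfPlane x e2 = {z | z 1 ∈ Ioi (x 1)} := by
    ext z; simp [halfPlane, dot, e2]
  have below : halfPlane x (-e2) = {z | z 1 ∈ Iio (x 1)} := by
    ext z; simp [halfPlane, dot, e2]
  refine jumpPt_iff.2 ⟨_, _, e2, hne, by simp [vnorm, e2],
    approxLimWithin_of_tendsto hΩ hx hu (measurableSet_halfPlane _ _) ?_,
    approxLimWithin_of_tendsto hΩ hx hu (measurableSet_halfPlane _ _) ?_⟩
  · rw [above]; exact tendsto_horizAffine hr
  · rw [below]; exact tendsto_horizAffine hl

theorem not_continuousAt_of_jumpPt (hΩ : IsOpen Ω) (hx : x ∈ Ω)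
    (hu : ∀ᵐ z ∂(volume.restrict Ω), u z = horizAffine f z) (hj : JumpPt u x) :
    ¬ ContinuousAt f (x 1) := fun hf =>
  not_jumpPt_of_continuousAt hΩ hx hu (continuousAt_horizAffine hf) hj

theorem eq_of_smul_add_eq_smul_add {E : Type*} [AddCommGroup E] [Module ℝ E] {p q : E × E}
    {s₁ s₂ : ℝ} (hne : s₁ ≠ s₂) (h₁ : s₁ • p.1 + p.2 = s₁ • q.1 + q.2)
    (h₂ : s₂ • p.1 + p.2 = s₂ • q.1 + q.2) : p = q := by
  have hsmul : (s₁ - s₂) • (p.1 - q.1) = 0 := by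
    linear_combination (norm := module) h₁ - h₂
  have hfst : p.1 = q.1 :=
    sub_eq_zero.1 ((smul_eq_zero.1 hsmul).resolve_left (sub_ne_zero.2 hne))
  rw [hfst] at h₁
  exact Prod.ext hfst (add_left_cancel h₁)

theorem exists_slice_diff_singleton_subset_jumpSet {c d a b t : ℝ} (ht : t ∈ Ioo a b)
    (hf : CadlagOn f (Ioo a b))
    (hu : ∀ᵐ x ∂(volume.restrict (openBox c d a b)), u x = horizAffine f x)
    (hdisc : ¬ ContinuousAt f t) :
    ∃ q, (fun s : ℝ => (![s, t] : V2)) '' (Ioo c d \ {q}) ⊆ jumpSet (openBox c d a b) u := by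
  obtain ⟨hright, l, hleft⟩ := hf t ht
  have hl : f t ≠ l := by
    rintro rfl
    exact hdisc (hf.continuousAt_of_tendsto_left ht hleft)
  have exceptional : ∃ q : ℝ, ∀ s : ℝ, s • (f t).1 + (f t).2 = s • l.1 + l.2 → s = q := by
    by_contra! h
    obtain ⟨s₁, h₁, -⟩ := h 0
    obtain ⟨s₂, h₂, hne⟩ := h s₁
    exact hl (eq_of_smul_add_eq_smul_add hne h₂ h₁)
  obtain ⟨q, hq⟩ := exceptional
  refine ⟨q, ?_⟩
  rintro _ ⟨s, ⟨hs, hsq⟩, rfl⟩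
  have hmem : ![s, t] ∈ openBox c d a b := ⟨hs, ht⟩
  exact ⟨hmem, jumpPt_of_tendsto_horizAffine_ne (isOpen_openBox c d a b) hmem hu hleft hright
    fun h => hsq (hq s h)⟩

theorem isometry_slice (t : ℝ) : Isometry fun s : ℝ => (![s, t] : V2) :=
  Isometry.of_dist_eq fun s s' => by rw [dist_pi_def]; simp [Fin.univ_succ]

theorem finite_discontinuities {c d a b : ℝ} (hcd : c < d) (hf : CadlagOn f (Ioo a b))
    (hu : ∀ᵐ x ∂(volume.restrict (openBox c d a b)), u x = horizAffine f x)
    (hJ : Measure.hausdorffMeasure 1 (jumpSet (openBox c d a b) u) ≠ ⊤) :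
    {t ∈ Ioo a b | ¬ ContinuousAt f t}.Finite := by
  let jumps := {t ∈ Ioo a b | ¬ ContinuousAt f t}
  choose q hq using fun t : jumps =>
    exists_slice_diff_singleton_subset_jumpSet (c := c) (d := d) t.2.1 hf hu t.2.2
  let slice (t : jumps) : Set V2 := (fun s : ℝ => ![s, t]) '' (Ioo c d \ {q t})
  have slice_measurable (t : jumps) : MeasurableSet (slice t) :=
    (isometry_slice t).isClosedEmbedding.measurableEmbedding.measurableSet_image.2
      (measurableSet_Ioo.diff (measurableSet_singleton _))
  have slice_disjoint : Pairwise (Function.onFun Disjoint slice) := by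
    refine fun t t' hne => Set.disjoint_left.2 ?_
    rintro _ ⟨s, -, rfl⟩ ⟨s', -, h⟩
    exact hne (Subtype.ext (congr_fun h 1).symm)
  have slice_measure (t : jumps) :
      Measure.hausdorffMeasure 1 (slice t) = ENNReal.ofReal (d - c) := by
    rw [(isometry_slice t).hausdorffMeasure_image (.inl zero_le_one), hausdorffMeasure_real,
      measure_sdiff_null (measure_singleton _), Real.volume_Ioo]
  have finite_jumps := Measure.finite_const_le_meas_of_disjoint_iUnion _
    (ENNReal.ofReal_pos.2 (sub_pos.2 hcd)) slice_measurable slice_disjoint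
    (ne_top_of_le_ne_top hJ (measure_mono (iUnion_subset hq)))
  simp only [slice_measure, le_refl, ofPred_true, finite_univ_iff] at finite_jumps
  exact finite_jumps

end HorizontallyAffine

section WeakDerivative

open ContinuousLinearMap (lsmul)

variable {E : Type*} [NormedAddCommGroup E] [NormedSpace ℝ E]

theorem fderiv_comp_const_sub {ρ : E → ℝ} {x z : E} (hρ : DifferentiableAt ℝ ρ (x - z)) :
    fderiv ℝ (fun z => ρ (x - z)) z = -fderiv ℝ ρ (x - z) := by
  have h := (hρ.hasFDerivAt.comp z ((hasFDerivAt_id z).const_sub x)).fderiv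
  simpa [Function.comp_def] using h

variable [MeasurableSpace E] {μ : Measure E} {g : E → ℝ} {w : E} {M : ℝ} {U : Set E}

/-- The distributional derivative of `g` in the direction `w` is bounded by `M` on the open set
`U`; the bound is imposed on the action on test functions. -/
def WeakLineDerivBoundedOn (μ : Measure E) (g : E → ℝ) (w : E) (M : ℝ) (U : Set E) : Prop :=
  ∀ φ : E → ℝ, ContDiff ℝ (⊤ : ℕ∞) φ → HasCompactSupport φ → tsupport φ ⊆ U →
    |∫ z, g z * fderiv ℝ φ z w ∂μ| ≤ M * ∫ z, |φ z| ∂μ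

variable [FiniteDimensional ℝ E] [BorelSpace E] [μ.IsAddHaarMeasure]

theorem fderiv_convolution_lsmul_apply {ρ : E → ℝ} (hρ : ContDiff ℝ 1 ρ)
    (hρc : HasCompactSupport ρ) (hg : LocallyIntegrable g μ) (x w : E) :
    fderiv ℝ (convolution ρ g (lsmul ℝ ℝ) μ) x w =
      -∫ z, g z * fderiv ℝ (fun z => ρ (x - z)) z w ∂μ := by
  have hexists := (hρc.fderiv ℝ).convolutionExists_left ((lsmul ℝ ℝ).precompL E)
    (hρ.continuous_fderiv one_ne_zero) hg x
  rw [(hρc.hasFDerivAt_convolution_left (lsmul ℝ ℝ) hρ hg x).fderiv, convolution_def,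
    ContinuousLinearMap.integral_apply hexists, ← integral_sub_left_eq_self _ μ x, ← integral_neg]
  congr 1 with z
  simp [fderiv_comp_const_sub (hρ.differentiable one_ne_zero _), mul_comm]

theorem abs_fderiv_normed_convolution_le (hg : LocallyIntegrable g μ)
    (hbound : WeakLineDerivBoundedOn μ g w M U) (B : ContDiffBump (0 : E)) {x : E}
    (hball : Metric.closedBall x B.rOut ⊆ U) :
    |fderiv ℝ (convolution (B.normed μ) g (lsmul ℝ ℝ) μ) x w| ≤ M := by
  let φ (z : E) : ℝ := B.normed μ (x - z)
  have φ_smooth : ContDiff ℝ (⊤ : ℕ∞) φ := B.contDiff_normed.comp (contDiff_const.sub contDiff_id)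
  have φ_tsupport : tsupport φ ⊆ Metric.closedBall x B.rOut := by
    refine closure_minimal (fun z hz => ?_) Metric.isClosed_closedBall
    have hmem : x - z ∈ Function.support (B.normed μ) := hz
    rw [B.support_normed_eq, mem_ball_zero_iff, norm_sub_rev] at hmem
    exact mem_closedBall_iff_norm.2 hmem.le
  have φ_compact : HasCompactSupport φ :=
    (isCompact_closedBall x B.rOut).of_isClosed_subset (isClosed_tsupport φ) φ_tsupport
  have φ_integral : ∫ z, |φ z| ∂μ = 1 := by
    simp only [φ, abs_of_nonneg (B.nonneg_normed _)]
    rw [integral_sub_left_eq_self (B.normed μ) μ x, B.integral_normed]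
  have h := hbound φ φ_smooth φ_compact (φ_tsupport.trans hball)
  rw [φ_integral, mul_one] at h
  rwa [fderiv_convolution_lsmul_apply B.contDiff_normed B.hasCompactSupport_normed hg, abs_neg]

theorem abs_normed_convolution_sub_le (hg : LocallyIntegrable g μ) {x y : E}
    (hbound : WeakLineDerivBoundedOn μ g (y - x) M U) (B : ContDiffBump (0 : E))
    (hball : ∀ z ∈ segment ℝ x y, Metric.closedBall z B.rOut ⊆ U) :
    |convolution (B.normed μ) g (lsmul ℝ ℝ) μ y - convolution (B.normed μ) g (lsmul ℝ ℝ) μ x|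
      ≤ M := by
  set G := convolution (B.normed μ) g (lsmul ℝ ℝ) μ
  have G_differentiable : Differentiable ℝ G :=
    (B.hasCompactSupport_normed.contDiff_convolution_left (lsmul ℝ ℝ)
      (B.contDiff_normed (n := 1)) hg).differentiable one_ne_zero
  have hderiv (τ : ℝ) : HasDerivAt (fun τ => G (AffineMap.lineMap x y τ))
      (fderiv ℝ G (AffineMap.lineMap x y τ) (y - x)) τ :=
    (G_differentiable _).hasFDerivAt.comp_hasDerivAt τ AffineMap.hasDerivAt_lineMap
  have h := norm_image_sub_le_of_norm_deriv_le_segment_01' (C := M)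
    (fun τ _ => (hderiv τ).hasDerivWithinAt) fun τ hτ =>
      abs_fderiv_normed_convolution_le hg hbound B <| hball _ <| by
        rw [segment_eq_image_lineMap]
        exact mem_image_of_mem _ (Ico_subset_Icc_self hτ)
  simpa only [AffineMap.lineMap_apply_one, AffineMap.lineMap_apply_zero,
    Real.norm_eq_abs] using h

-- Mollify, apply the mean value inequality to the mollifications, and pass to the limit.
theorem abs_sub_le_of_weakLineDerivBoundedOn (hU : IsOpen U) (hg : LocallyIntegrable g μ) {x y : E}
    (hsegment : segment ℝ x y ⊆ U) (hx : ContinuousAt g x) (hy : ContinuousAt g y)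
    (hbound : WeakLineDerivBoundedOn μ g (y - x) M U) : |g y - g x| ≤ M := by
  obtain ⟨δ, hδ, hδU⟩ :=
    (segment_eq_image_lineMap ℝ x y ▸
      isCompact_Icc.image AffineMap.lineMap_continuous).exists_cthickening_subset_open hU hsegment
  let B (n : ℕ) : ContDiffBump (0 : E) :=
    ⟨δ / (n + 1) / 2, δ / (n + 1), by positivity, half_lt_self (by positivity)⟩
  have rOut_tendsto : Tendsto (fun n => (B n).rOut) atTop (𝓝 0) := by
    simpa [B, div_eq_mul_inv] using tendsto_one_div_add_atTop_nhds_zero_nat.const_mul δ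
  have rOut_le (n : ℕ) : (B n).rOut ≤ δ := div_le_self hδ.le (by linarith [n.cast_nonneg (α := ℝ)])
  have mollified_tendsto {z : E} (hz : ContinuousAt g z) :
      Tendsto (fun n => convolution ((B n).normed μ) g (lsmul ℝ ℝ) μ z) atTop (𝓝 (g z)) :=
    ContDiffBump.convolution_tendsto_right rOut_tendsto
      (.of_forall fun _ => hg.aestronglyMeasurable) (hz.tendsto.comp tendsto_snd)
      tendsto_const_nhds
  refine le_of_tendsto ((mollified_tendsto hy).sub (mollified_tendsto hx)).abs
    (.of_forall fun n => abs_normed_convolution_sub_le hg hbound (B n) fun z hz => ?_)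
  exact (Metric.closedBall_subset_closedBall (rOut_le n)).trans
    ((Metric.closedBall_subset_cthickening hz δ).trans hδU)

end WeakDerivative

section SpecialBV

theorem WeakLineDerivBoundedOn.smul {E : Type*} [NormedAddCommGroup E] [NormedSpace ℝ E]
    [MeasurableSpace E] {μ : Measure E} {g : E → ℝ} {w : E} {M : ℝ} {U : Set E}
    (h : WeakLineDerivBoundedOn μ g w M U) (r : ℝ) :
    WeakLineDerivBoundedOn μ g (r • w) (|r| * M) U := by
  intro φ hφ hφc hφU
  simp only [map_smul, smul_eq_mul, mul_left_comm _ r, integral_const_mul, abs_mul, mul_assoc]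
  exact mul_le_mul_of_nonneg_left (h φ hφ hφc hφU) (abs_nonneg r)

theorem integral_mul_fderiv_eq_neg_of_lipschitzOnWith {E : Type*} [NormedAddCommGroup E]
    [NormedSpace ℝ E] [FiniteDimensional ℝ E] [MeasurableSpace E] [BorelSpace E] {μ : Measure E}
    [μ.IsAddHaarMeasure] {U : Set E} (hU : IsOpen U) {v : E → ℝ} {K : NNReal}
    (hv : LipschitzOnWith K v U) {φ : E → ℝ} (hφ : ContDiff ℝ (⊤ : ℕ∞) φ)
    (hφc : HasCompactSupport φ) (hφU : tsupport φ ⊆ U) (w : E) :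
    ∫ x in U, v x * fderiv ℝ φ x w ∂μ = -∫ x in U, φ x * lineDeriv ℝ v x w ∂μ := by
  obtain ⟨V, hV, V_eq⟩ := hv.extend_real
  obtain ⟨D, hD⟩ := ContDiff.lipschitzWith_of_hasCompactSupport hφc hφ (by simp)
  have lineDeriv_eq {x : E} (hx : x ∈ U) : lineDeriv ℝ V x w = lineDeriv ℝ v x w :=
    (V_eq.symm.eventuallyEq_of_mem (hU.mem_nhds hx)).lineDeriv_eq
  have φ_eq_zero (x : E) (hx : x ∉ U) : φ x = 0 :=
    image_eq_zero_of_notMem_tsupport fun h => hx (hφU h)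
  have fderiv_eq_zero (x : E) (hx : x ∉ U) : fderiv ℝ φ x = 0 :=
    image_eq_zero_of_notMem_tsupport fun h => hx (hφU (tsupport_fderiv_subset ℝ h))
  calc ∫ x in U, v x * fderiv ℝ φ x w ∂μ
      = ∫ x in U, V x * fderiv ℝ φ x w ∂μ :=
        setIntegral_congr_fun hU.measurableSet fun x hx => by simp only [V_eq hx]
    _ = ∫ x, V x * fderiv ℝ φ x w ∂μ :=
        setIntegral_eq_integral_of_forall_compl_eq_zero fun x hx => by simp [fderiv_eq_zero x hx]
    _ = -∫ x, lineDeriv ℝ V x w * φ x ∂μ := by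
        rw [hV.integral_lineDeriv_mul_eq hD hφc, ← integral_neg]
        congr 1 with x
        rw [(hφ.differentiable (by simp) x).lineDeriv_eq_fderiv, map_neg]
        ring
    _ = -∫ x in U, lineDeriv ℝ V x w * φ x ∂μ := by
        rw [setIntegral_eq_integral_of_forall_compl_eq_zero fun x hx => by simp [φ_eq_zero x hx]]
    _ = -∫ x in U, φ x * lineDeriv ℝ v x w ∂μ := by
        rw [setIntegral_congr_fun hU.measurableSet fun x hx => by
          rw [lineDeriv_eq hx, mul_comm]]

theorem ae_eq_zero_of_integral_add_integral_eq_zero {E : Type*} [NormedAddCommGroup E]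
    [NormedSpace ℝ E] [FiniteDimensional ℝ E] [MeasurableSpace E] [BorelSpace E] {μ ν : Measure E}
    (hμν : μ ⟂ₘ ν) {U : Set E} (hU : IsOpen U) {f h : E → ℝ} (hf : Integrable f μ)
    (hh : Integrable h ν)
    (hzero : ∀ φ : E → ℝ, ContDiff ℝ (⊤ : ℕ∞) φ → HasCompactSupport φ → tsupport φ ⊆ U →
      ∫ x, φ x * f x ∂μ + ∫ x, φ x * h x ∂ν = 0) :
    ∀ᵐ x ∂μ, x ∈ U → f x = 0 := by
  classical
  obtain ⟨N, -, hμN, hνN⟩ := hμν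
  let F : E → ℝ := N.piecewise h f
  have F_eq_f : F =ᵐ[μ] f := by
    filter_upwards [measure_eq_zero_iff_ae_notMem.1 hμN] with x hx
    exact piecewise_eq_of_notMem _ _ _ hx
  have F_eq_h : F =ᵐ[ν] h := by
    filter_upwards [measure_eq_zero_iff_ae_notMem.1 hνN] with x hx
    exact piecewise_eq_of_mem _ _ _ (not_not.1 hx)
  have hFμ : Integrable F μ := hf.congr F_eq_f.symm
  have hFν : Integrable F ν := hh.congr F_eq_h.symm
  have F_eq_zero : ∀ᵐ x ∂(μ + ν), x ∈ U → F x = 0 := by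
    refine hU.ae_eq_zero_of_integral_contDiff_smul_eq_zero
      ((hFμ.add_measure hFν).locallyIntegrable.locallyIntegrableOn U) fun φ hφ hφc hφU => ?_
    obtain ⟨C, hC⟩ := hφc.exists_bound_of_continuous hφ.continuous
    have integrable_mul {ρ : Measure E} (hF : Integrable F ρ) :
        Integrable (fun x => φ x • F x) ρ :=
      hF.bdd_mul hφ.continuous.aestronglyMeasurable (.of_forall hC)
    rw [integral_add_measure (integrable_mul hFμ) (integrable_mul hFν),
      ← hzero φ hφ hφc hφU]
    congr 1 <;> refine integral_congr_ae ?_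
    · filter_upwards [F_eq_f] with x hx
      rw [hx, smul_eq_mul]
    · filter_upwards [F_eq_h] with x hx
      rw [hx, smul_eq_mul]
  filter_upwards [(ae_add_measure_iff.1 F_eq_zero).1, F_eq_f] with x hzero hx hU
  rw [← hx, hzero hU]

variable {Ω : Set V2} {u : V2 → V2} {gu : V2 → Mat2} {σ : Measure V2} {gs : V2 → Mat2}

theorem weakLineDerivBoundedOn_of_hasBVDerivOn (hu : HasBVDerivOn Ω u gu σ gs)
    (hΩ : MeasurableSet Ω) {i : Fin 2} {v : V2 → ℝ}
    (huv : ∀ᵐ x ∂(volume.restrict Ω), u x i = v x) {U : Set V2} (hUΩ : U ⊆ Ω) (hσ : σ U = 0) {M : ℝ}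
    (hM : ∀ᵐ x ∂(volume.restrict Ω), mnorm (gu x) ≤ M) (j : Fin 2) :
    WeakLineDerivBoundedOn volume (Ω.indicator v) (Pi.single j 1) M U := by
  intro φ hφ hφc hφU
  have φ_eq_zero (x : V2) (hx : x ∉ U) : φ x = 0 :=
    image_eq_zero_of_notMem_tsupport fun h => hx (hφU h)
  have singular_part : ∫ x, φ x * gs x i j ∂σ = 0 := by
    refine integral_eq_zero_of_ae ?_
    filter_upwards [measure_eq_zero_iff_ae_notMem.1 hσ] with x hx
    rw [φ_eq_zero x hx, zero_mul, Pi.zero_apply]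
  have weak_deriv : ∫ x, Ω.indicator v x * fderiv ℝ φ x (Pi.single j 1) =
      -∫ x in Ω, φ x * gu x i j := by
    have hibp := hu.ibp φ hφ hφc (hφU.trans hUΩ) i j
    rw [singular_part, sub_zero] at hibp
    rw [← hibp]
    simp_rw [← indicator_mul_left Ω v fun x => fderiv ℝ φ x (Pi.single j 1)]
    rw [integral_indicator hΩ]
    exact integral_congr_ae (huv.mono fun x hx => by simp only [hx, pd])
  have φ_integrable : Integrable φ := hφ.continuous.integrable_of_hasCompactSupport hφc
  rw [weak_deriv, abs_neg]
  calc |∫ x in Ω, φ x * gu x i j|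
      ≤ ∫ x in Ω, M * |φ x| := by
        rw [← Real.norm_eq_abs]
        refine norm_integral_le_of_norm_le (φ_integrable.abs.const_mul M).integrableOn ?_
        filter_upwards [hM] with x hx
        rw [norm_mul, mul_comm]
        exact mul_le_mul_of_nonneg_right ((abs_entry_le_mnorm _ i j).trans hx) (norm_nonneg _)
    _ = M * ∫ x, |φ x| := by
        rw [integral_const_mul, setIntegral_eq_integral_of_forall_compl_eq_zero fun x hx => by
          rw [φ_eq_zero x fun h => hx (hUΩ h), abs_zero]]

theorem integrable_singularPart_entry (hu : HasBVDerivOn Ω u gu σ gs) (i j : Fin 2) :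
    Integrable (fun x => gs x i j) σ := by
  have : IsFiniteMeasure σ := ⟨hu.fin.lt_top⟩
  refine .of_bound (hu.meas_gs i j).aestronglyMeasurable 1 ?_
  filter_upwards [hu.unit] with x hx
  exact hx ▸ abs_entry_le_mnorm (gs x) i j

theorem setIntegral_ibp_of_subset (hu : HasBVDerivOn Ω u gu σ gs) {U : Set V2} (hUΩ : U ⊆ Ω)
    {φ : V2 → ℝ} (hφ : ContDiff ℝ (⊤ : ℕ∞) φ) (hφc : HasCompactSupport φ) (hφU : tsupport φ ⊆ U)
    (i j : Fin 2) :
    ∫ x in U, u x i * pd j φ x = -(∫ x in U, φ x * gu x i j) - ∫ x, φ x * gs x i j ∂σ := by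
  have restrict_to_U {F : V2 → ℝ} (hF : ∀ x ∉ tsupport φ, F x = 0) :
      ∫ x in Ω, F x = ∫ x in U, F x := by
    rw [setIntegral_eq_integral_of_forall_compl_eq_zero fun x hx => hF x fun h => hx (hφU h),
      setIntegral_eq_integral_of_forall_compl_eq_zero fun x hx => hF x fun h => hx (hUΩ (hφU h))]
  have h := hu.ibp φ hφ hφc (hφU.trans hUΩ) i j
  rwa [restrict_to_U fun x hx => ?_, restrict_to_U fun x hx => ?_] at h
  · rw [image_eq_zero_of_notMem_tsupport hx, zero_mul]
  · simp [pd, image_eq_zero_of_notMem_tsupport fun h => hx (tsupport_fderiv_subset ℝ h)]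

theorem ae_gradient_eq_lineDeriv_of_lipschitzOnWith (hu : HasBVDerivOn Ω u gu σ gs)
    {i : Fin 2} {v : V2 → ℝ} {U : Set V2} (hU : IsOpen U) (hUΩ : U ⊆ Ω) (hfin : volume U ≠ ⊤)
    (huv : ∀ᵐ x ∂(volume.restrict U), u x i = v x) {K : NNReal} (hv : LipschitzOnWith K v U)
    (j : Fin 2) :
    ∀ᵐ x ∂(volume.restrict U), gu x i j = lineDeriv ℝ v x (Pi.single j 1) := by
  have lineDeriv_integrable : IntegrableOn (fun x => lineDeriv ℝ v x (Pi.single j 1)) U := by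
    obtain ⟨V, hV, V_eq⟩ := hv.extend_real
    have : IsFiniteMeasure (volume.restrict U) := isFiniteMeasure_restrict.2 hfin
    refine IntegrableOn.congr_fun (f := fun x => lineDeriv ℝ V x (Pi.single j 1))
      ((hV.memLp_lineDeriv _).integrable le_top) (fun x hx => ?_) hU.measurableSet
    exact (V_eq.symm.eventuallyEq_of_mem (hU.mem_nhds hx)).lineDeriv_eq
  have gu_integrable : IntegrableOn (fun x => gu x i j) U := (hu.int_gu i j).mono_set hUΩ
  have h := ae_eq_zero_of_integral_add_integral_eq_zero (hu.perp.symm.mono_ac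
    Measure.restrict_le_self.absolutelyContinuous .rfl) hU
    (gu_integrable.sub lineDeriv_integrable) (integrable_singularPart_entry hu i j)
    fun φ hφ hφc hφU => ?_
  · filter_upwards [h, ae_restrict_mem hU.measurableSet] with x hx hxU
    exact sub_eq_zero.1 (hx hxU)
  obtain ⟨C, hC⟩ := hφc.exists_bound_of_continuous hφ.continuous
  have integrable_mul {F : V2 → ℝ} (hF : Integrable F (volume.restrict U)) :
      Integrable (fun x => φ x * F x) (volume.restrict U) :=
    hF.bdd_mul hφ.continuous.aestronglyMeasurable (.of_forall hC)
  have hibp := setIntegral_ibp_of_subset hu hUΩ hφ hφc hφU i j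
  have hweak := integral_mul_fderiv_eq_neg_of_lipschitzOnWith (μ := volume) hU hv hφ hφc hφU
    (Pi.single j 1)
  have hcongr : ∫ x in U, u x i * pd j φ x = ∫ x in U, v x * fderiv ℝ φ x (Pi.single j 1) :=
    integral_congr_ae (huv.mono fun x hx => by simp only [hx, pd])
  simp only [Pi.sub_apply, mul_sub]
  rw [integral_sub (integrable_mul gu_integrable) (integrable_mul lineDeriv_integrable)]
  linarith

theorem ae_gradient_eq_lineDeriv (hu : HasBVDerivOn Ω u gu σ gs)
    {i : Fin 2} {v : V2 → ℝ} {U : Set V2} (hU : IsOpen U) (hUΩ : U ⊆ Ω)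
    (huv : ∀ᵐ x ∂(volume.restrict U), u x i = v x) (hv : LocallyLipschitzOn U v)
    (j : Fin 2) :
    ∀ᵐ x ∂(volume.restrict U), gu x i j = lineDeriv ℝ v x (Pi.single j 1) := by
  rw [ae_restrict_iff' hU.measurableSet, ae_iff]
  refine measure_null_of_locally_null _ fun x hx => ?_
  have hxU : x ∈ U := by_contra fun h => hx fun h' => absurd h' h
  obtain ⟨K, W, hW, hK⟩ := hv hxU
  rw [hU.nhdsWithin_eq hxU] at hW
  obtain ⟨r, hr, hball⟩ := Metric.mem_nhds_iff.1 (inter_mem hW (hU.mem_nhds hxU))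
  have ball_subset_U : Metric.ball x r ⊆ U := hball.trans inter_subset_right
  have h := ae_gradient_eq_lineDeriv_of_lipschitzOnWith hu Metric.isOpen_ball
    (ball_subset_U.trans hUΩ) measure_ball_lt_top.ne
    (ae_restrict_of_ae_restrict_of_subset ball_subset_U huv)
    (hK.mono (hball.trans inter_subset_left)) j
  rw [ae_restrict_iff' measurableSet_ball, ae_iff] at h
  refine ⟨_, inter_mem_nhdsWithin _ (Metric.ball_mem_nhds x hr), measure_mono_null ?_ h⟩
  exact fun z hz hball => hz.1 fun _ => hball hz.2

end SpecialBV

section PiecewiseLipschitz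

/-- Functions of one variable that are constant on each interval contained in `U`. Taking for `U` an
interval minus a finite set gives the class `PC`. -/
def ConstantOnIntervals {α : Type*} (f : ℝ → α) (U : Set ℝ) : Prop :=
  ∀ s t, s ≤ t → Icc s t ⊆ U → f s = f t

/-- Functions of one variable that are `L`-Lipschitz on each interval contained in `U`. Taking for
`U` an interval minus a finite set gives the one-dimensional class `SBV_∞`. -/
def LipschitzOnIntervals {E : Type*} [PseudoMetricSpace E] (L : NNReal) (f : ℝ → E)
    (U : Set ℝ) : Prop :=
  ∀ s t, s ≤ t → Icc s t ⊆ U → dist (f s) (f t) ≤ L * (t - s)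

theorem ConstantOnIntervals.comp {α β : Type*} {f : ℝ → α} {U : Set ℝ} (g : α → β)
    (hf : ConstantOnIntervals f U) : ConstantOnIntervals (fun t => g (f t)) U :=
  fun s t hst hU => congr_arg g (hf s t hst hU)

theorem ConstantOnIntervals.mono {α : Type*} {f : ℝ → α} {U V : Set ℝ}
    (hf : ConstantOnIntervals f V) (hUV : U ⊆ V) : ConstantOnIntervals f U :=
  fun s t hst hU => hf s t hst (hU.trans hUV)

theorem ConstantOnIntervals.lipschitzOnIntervals {E : Type*} [PseudoMetricSpace E] {f : ℝ → E}
    {U : Set ℝ} (hf : ConstantOnIntervals f U) : LipschitzOnIntervals 0 f U :=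
  fun s t hst hU => by simp [hf s t hst hU]

theorem ConstantOnIntervals.eventuallyEq {α : Type*} {f : ℝ → α} {U : Set ℝ}
    (hf : ConstantOnIntervals f U) (hU : IsOpen U) {t : ℝ} (ht : t ∈ U) :
    f =ᶠ[𝓝 t] fun _ => f t := by
  obtain ⟨r, hr, hball⟩ := Metric.isOpen_iff.1 hU t ht
  filter_upwards [Metric.ball_mem_nhds t hr] with s hs
  have hball_ordConnected : (Metric.ball t r).OrdConnected := (convex_ball t r).ordConnected
  rcases le_total s t with hst | hts
  · exact hf s t hst ((hball_ordConnected.out hs (Metric.mem_ball_self hr)).trans hball)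
  · exact (hf t s hts ((hball_ordConnected.out (Metric.mem_ball_self hr) hs).trans hball)).symm

section PseudoMetric

variable {E F : Type*} [PseudoMetricSpace E] [PseudoMetricSpace F] {L : NNReal} {f : ℝ → E}
  {U : Set ℝ}

theorem LipschitzOnIntervals.mono {V : Set ℝ} (hf : LipschitzOnIntervals L f V) (hUV : U ⊆ V) :
    LipschitzOnIntervals L f U :=
  fun s t hst hU => hf s t hst (hU.trans hUV)

theorem LipschitzOnIntervals.comp_lipschitzWith {K : NNReal} {g : E → F} (hg : LipschitzWith K g)
    (hf : LipschitzOnIntervals L f U) : LipschitzOnIntervals (K * L) (fun t => g (f t)) U := by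
  intro s t hst hU
  refine (hg.dist_le_mul _ _).trans ?_
  rw [NNReal.coe_mul, mul_assoc]
  exact mul_le_mul_of_nonneg_left (hf s t hst hU) K.coe_nonneg

theorem LipschitzOnIntervals.prodMk {K : NNReal} {g : ℝ → F} (hf : LipschitzOnIntervals L f U)
    (hg : LipschitzOnIntervals K g U) :
    LipschitzOnIntervals (max L K) (fun t => (f t, g t)) U := by
  intro s t hst hU
  rw [Prod.dist_eq, NNReal.coe_max, max_mul_of_nonneg _ _ (sub_nonneg.2 hst)]
  exact max_le_max (hf s t hst hU) (hg s t hst hU)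

theorem LipschitzOnIntervals.lipschitzOnWith (hf : LipschitzOnIntervals L f U) {I : Set ℝ}
    (hI : I.OrdConnected) (hIU : I ⊆ U) : LipschitzOnWith L f I := by
  refine LipschitzOnWith.of_dist_le_mul fun s hs t ht => ?_
  rcases le_total s t with hst | hts
  · rw [dist_comm s, Real.dist_eq, abs_of_nonneg (sub_nonneg.2 hst)]
    exact hf s t hst ((hI.out hs ht).trans hIU)
  · rw [dist_comm (f s), Real.dist_eq, abs_of_nonneg (sub_nonneg.2 hts)]
    exact hf t s hts ((hI.out ht hs).trans hIU)

theorem LipschitzOnIntervals.locallyLipschitzOn (hf : LipschitzOnIntervals L f U)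
    (hU : IsOpen U) : LocallyLipschitzOn U f := by
  intro t ht
  obtain ⟨r, hr, hball⟩ := Metric.isOpen_iff.1 hU t ht
  exact ⟨L, Metric.ball t r, mem_nhdsWithin_of_mem_nhds (Metric.ball_mem_nhds t hr),
    hf.lipschitzOnWith (convex_ball t r).ordConnected hball⟩

theorem boundedVariationOn_Ioo_of_split [CompleteSpace E] {p q r : ℝ} (hr : r ∈ Ioo p q)
    (hleft : BoundedVariationOn f (Ioo p r)) (hright : BoundedVariationOn f (Ioo r q)) :
    BoundedVariationOn f (Ioo p q) := by
  obtain ⟨l, hl⟩ : ∃ l, Tendsto f (𝓝[Ioo p r] r) (𝓝 l) := by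
    simpa only [inter_eq_left.2 Ioo_subset_Iio_self] using hleft.exists_tendsto_left r
  obtain ⟨m, hm⟩ : ∃ m, Tendsto f (𝓝[Ioo r q] r) (𝓝 m) := by
    simpa only [inter_eq_left.2 Ioo_subset_Ioi_self] using hright.exists_tendsto_right r
  have Ioc_variation : eVariationOn f (Ioc p r) = eVariationOn f (Ioo p r) + edist (f r) l := by
    have : (𝓝[Ioo p r] r).NeBot := right_nhdsWithin_Ioo_neBot hr.1
    exact eVariationOn.eVariationOn_on_inter_Iic_eq_Iio_add_edist (s := Ioi p) this hr.1 hl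
  have Ico_variation : eVariationOn f (Ico r q) = eVariationOn f (Ioo r q) + edist (f r) m := by
    have : (𝓝[Ioo r q] r).NeBot := left_nhdsWithin_Ioo_neBot hr.2
    have h := eVariationOn.eVariationOn_on_inter_Ici_eq_Ioi_add_edist (f := f) (s := Iio q)
      (by rwa [inter_comm, Ioi_inter_Iio]) hr.2 (by rwa [inter_comm, Ioi_inter_Iio])
    rwa [inter_comm, Ici_inter_Iio, inter_comm, Ioi_inter_Iio] at h
  rw [BoundedVariationOn, ← Ioc_union_Ico_eq_Ioo hr.1 hr.2,
    eVariationOn.union f (isGreatest_Ioc hr.1) (isLeast_Ico hr.2), Ioc_variation, Ico_variation]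
  exact ENNReal.add_ne_top.2 ⟨ENNReal.add_ne_top.2 ⟨hleft, edist_ne_top _ _⟩,
    ENNReal.add_ne_top.2 ⟨hright, edist_ne_top _ _⟩⟩

theorem LipschitzOnIntervals.boundedVariationOn_Ioo [CompleteSpace E] {S : Finset ℝ} {a b : ℝ}
    (hf : LipschitzOnIntervals L f (Ioo a b \ S)) : BoundedVariationOn f (Ioo a b) := by
  induction S using Finset.induction_on generalizing a b with
  | empty =>
    rw [Finset.coe_empty, sdiff_empty] at hf
    exact (hf.lipschitzOnWith ordConnected_Ioo Subset.rfl).comp_boundedVariationOn (mapsTo_id _)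
      ((BoundedVariationOn.id_Icc a b).mono Ioo_subset_Icc_self)
  | insert r S _ ih =>
    rw [Finset.coe_insert] at hf
    by_cases hr : r ∈ Ioo a b
    · exact boundedVariationOn_Ioo_of_split hr (ih (hf.mono (by grind))) (ih (hf.mono (by grind)))
    · exact ih (hf.mono (by grind))

end PseudoMetric

section Normed

variable {E : Type*} [NormedAddCommGroup E] [NormedSpace ℝ E] {L : NNReal} {f : ℝ → E} {U : Set ℝ}

theorem LipschitzOnIntervals.add_smul_constantOnIntervals {K : NNReal} {w : ℝ → E}
    (hf : LipschitzOnIntervals L f U) (hw : ConstantOnIntervals w U) (hK : ∀ t ∈ U, ‖w t‖ ≤ K) :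
    LipschitzOnIntervals (L + K) (fun t => f t + t • w t) U := by
  intro s t hst hU
  have h : ‖f s + s • w s - (f t + t • w t)‖ ≤ ‖f s - f t‖ + ‖(t - s) • w t‖ := by
    rw [hw s t hst hU, show f s + s • w t - (f t + t • w t) = f s - f t - (t - s) • w t by module]
    exact norm_sub_le _ _
  have hKt := hK t (hU (right_mem_Icc.2 hst))
  have hf_st := hf s t hst hU
  rw [norm_smul, Real.norm_of_nonneg (sub_nonneg.2 hst)] at h
  rw [dist_eq_norm] at hf_st ⊢
  rw [NNReal.coe_add]
  nlinarith [sub_nonneg.2 hst]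

theorem LipschitzOnIntervals.constantOnIntervals_of_ae_hasDerivAt_zero
    (hf : LipschitzOnIntervals L f U) (hderiv : ∀ᵐ t, t ∈ U → HasDerivAt f 0 t) :
    ConstantOnIntervals f U := by
  intro s t hst hU
  rw [← uIcc_of_le hst] at hU
  obtain ⟨c, hc⟩ := (hf.lipschitzOnWith ordConnected_uIcc
    hU).absolutelyContinuousOnInterval.const_of_ae_hasDerivAt_zero
      (hderiv.mono fun r hr hrI => hr (hU hrI))
  rw [hc s left_mem_uIcc, hc t right_mem_uIcc]

theorem LipschitzOnIntervals.ae_differentiableAt [FiniteDimensional ℝ E] {S : Finset ℝ} {a b : ℝ}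
    (hf : LipschitzOnIntervals L f (Ioo a b \ S)) :
    ∀ᵐ t, t ∈ Ioo a b → DifferentiableAt ℝ f t := by
  have : CompleteSpace E := FiniteDimensional.complete ℝ E
  filter_upwards
    [hf.boundedVariationOn_Ioo.locallyBoundedVariationOn.ae_differentiableWithinAt_of_mem]
    with t ht hmem using (ht hmem).differentiableAt (isOpen_Ioo.mem_nhds hmem)

end Normed

section PiecewiseClasses

variable {a b : ℝ}

theorem Icc_subset_Ioo_diff_iff {s t : ℝ} (hst : s ≤ t) {S : Finset ℝ} :
    Icc s t ⊆ Ioo a b \ S ↔ s ∈ Ioo a b ∧ t ∈ Ioo a b ∧ ∀ r ∈ S, r ∉ Icc s t := by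
  refine ⟨fun h => ⟨(h (left_mem_Icc.2 hst)).1, (h (right_mem_Icc.2 hst)).1,
    fun r hr hrI => (h hrI).2 hr⟩, fun ⟨hs, ht, hS⟩ r hr => ?_⟩
  exact ⟨ordConnected_Ioo.out hs ht hr, fun hrS => hS r hrS hr⟩

theorem pcOn_iff {α : Type*} {f : ℝ → α} :
    PCOn a b f ↔ ∃ S : Finset ℝ, ConstantOnIntervals f (Ioo a b \ S) := by
  refine exists_congr fun S => ⟨fun h s t hst hU => ?_, fun h s hs t ht hst hS => ?_⟩
  · obtain ⟨hs, ht, hS⟩ := (Icc_subset_Ioo_diff_iff hst).1 hU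
    exact h s hs t ht hst hS
  · exact h s t hst ((Icc_subset_Ioo_diff_iff hst).2 ⟨hs, ht, hS⟩)

theorem pLipOn_iff {ψ : ℝ → V2} :
    PLipOn a b ψ ↔ ∃ S : Finset ℝ, ∃ L, LipschitzOnIntervals L ψ (Ioo a b \ S) := by
  refine exists_congr fun S => ⟨fun ⟨L, hL, h⟩ => ⟨⟨L, hL⟩, fun s t hst hU => ?_⟩,
    fun ⟨L, h⟩ => ⟨2 * L, by positivity, fun s hs t ht hst hS => ?_⟩⟩
  · obtain ⟨hs, ht, hS⟩ := (Icc_subset_Ioo_diff_iff hst).1 hU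
    rw [dist_comm, dist_eq_norm]
    exact (norm_le_vnorm _).trans (h s hs t ht hst hS)
  · have h_st := h s t hst ((Icc_subset_Ioo_diff_iff hst).2 ⟨hs, ht, hS⟩)
    rw [dist_comm, dist_eq_norm] at h_st
    exact (vnorm_le_two_mul_norm _).trans (by linarith)

theorem bvm_of_pcOn {R : ℝ → Mat2} (hR : PCOn a b R) : BVm R (Ioo a b) := by
  obtain ⟨S, hS⟩ := pcOn_iff.1 hR
  exact (hS.comp mToE).lipschitzOnIntervals.boundedVariationOn_Ioo

theorem bvv_of_pLipOn {ψ : ℝ → V2} (hψ : PLipOn a b ψ) : BVv ψ (Ioo a b) := by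
  obtain ⟨S, L, hS⟩ := pLipOn_iff.1 hψ
  exact (hS.comp_lipschitzWith
    (EuclideanSpace.equiv (Fin 2) ℝ).symm.lipschitz).boundedVariationOn_Ioo

end PiecewiseClasses

end PiecewiseLipschitz

section LipschitzProfile

theorem LipschitzOnIntervals.exists_of_smul_add {E : Type*} [NormedAddCommGroup E]
    [NormedSpace ℝ E] {f : ℝ → E × E} {U : Set ℝ} {s₁ s₂ : ℝ} (hne : s₁ ≠ s₂) {L₁ L₂ : NNReal}
    (h₁ : LipschitzOnIntervals L₁ (fun t => s₁ • (f t).1 + (f t).2) U)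
    (h₂ : LipschitzOnIntervals L₂ (fun t => s₂ • (f t).1 + (f t).2) U) :
    ∃ L, LipschitzOnIntervals L f U := by
  let slope : E × E →L[ℝ] E :=
    (s₁ - s₂)⁻¹ • (ContinuousLinearMap.fst ℝ E E - ContinuousLinearMap.snd ℝ E E)
  let solve : E × E →L[ℝ] E × E := slope.prod (ContinuousLinearMap.fst ℝ E E - s₁ • slope)
  have solve_apply (p : E × E) : solve (s₁ • p.1 + p.2, s₂ • p.1 + p.2) = p := by
    have hslope : slope (s₁ • p.1 + p.2, s₂ • p.1 + p.2) = p.1 := by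
      have : s₁ - s₂ ≠ 0 := sub_ne_zero.2 hne
      simp [slope, ← sub_smul, this]
    simp [solve, hslope]
  have h := (h₁.prodMk h₂).comp_lipschitzWith solve.lipschitz
  simp only [solve_apply] at h
  exact ⟨_, h⟩

variable {c d a b : ℝ} {u : V2 → V2} {gu : V2 → Mat2} {σ : Measure V2} {gs : V2 → Mat2}
  {f : ℝ → V2 × V2} {O : Set ℝ}

theorem abs_horizAffine_sub_le (hu : HasBVDerivOn (openBox c d a b) u gu σ gs)
    (huf : ∀ᵐ x ∂(volume.restrict (openBox c d a b)), u x = horizAffine f x)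
    (hO : IsOpen O) (hOab : O ⊆ Ioo a b) (hf : ∀ t ∈ O, ContinuousAt f t)
    (hσ : σ {x ∈ openBox c d a b | x 1 ∈ O} = 0) {M : ℝ}
    (hM : ∀ᵐ x ∂(volume.restrict (openBox c d a b)), mnorm (gu x) ≤ M) {r s t : ℝ}
    (hr : r ∈ Ioo c d) (hst : s ≤ t) (hI : Icc s t ⊆ O) (i : Fin 2) :
    |horizAffine f ![r, t] i - horizAffine f ![r, s] i| ≤ (t - s) * M := by
  let Ω := openBox c d a b
  let v (x : V2) : ℝ := horizAffine f x i
  have hΩ : IsOpen Ω := isOpen_openBox c d a b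
  have huv : ∀ᵐ x ∂(volume.restrict Ω), u x i = v x := huf.mono fun x hx => by rw [hx]
  have v_locallyIntegrable : LocallyIntegrable (Ω.indicator v) volume := by
    have h : IntegrableOn v Ω := ((integrable_pi_iff.1 hu.int_u) i).congr huv
    exact (h.integrable_indicator hΩ.measurableSet).locallyIntegrable
  have continuousAt_v {t : ℝ} (ht : t ∈ O) : ContinuousAt (Ω.indicator v) ![r, t] :=
    (((continuous_apply i).continuousAt.comp (continuousAt_horizAffine (hf t ht))).congr
      (eqOn_indicator.symm.eventuallyEq_of_mem (hΩ.mem_nhds ⟨hr, hOab ht⟩)))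
  have indicator_v {t : ℝ} (ht : t ∈ O) : Ω.indicator v ![r, t] = horizAffine f ![r, t] i :=
    indicator_of_mem (show ![r, t] ∈ Ω from ⟨hr, hOab ht⟩) v
  have hs := hI (left_mem_Icc.2 hst)
  have ht := hI (right_mem_Icc.2 hst)
  have displacement : (![r, t] - ![r, s] : V2) = (t - s) • Pi.single 1 1 := by
    ext j; fin_cases j <;> simp
  have segment_subset : segment ℝ ![r, s] ![r, t] ⊆ {x ∈ Ω | x 1 ∈ O} := by
    rintro _ ⟨α, β, hα, hβ, hαβ, rfl⟩
    have abscissa : α * r + β * r = r := by rw [← add_mul, hαβ, one_mul]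
    have height : α * s + β * t ∈ O := hI ((convex_Icc s t) (left_mem_Icc.2 hst)
      (right_mem_Icc.2 hst) hα hβ hαβ)
    simpa [Ω, openBox, abscissa, height] using ⟨hr, hOab height⟩
  have weak_bound := (weakLineDerivBoundedOn_of_hasBVDerivOn hu hΩ.measurableSet huv
    (sep_subset Ω fun x => x 1 ∈ O) hσ hM 1).smul (t - s)
  rw [abs_of_nonneg (sub_nonneg.2 hst), ← displacement] at weak_bound
  rw [← indicator_v hs, ← indicator_v ht]
  exact abs_sub_le_of_weakLineDerivBoundedOn (hΩ.inter (hO.preimage (continuous_apply 1)))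
    v_locallyIntegrable segment_subset (continuousAt_v hs) (continuousAt_v ht) weak_bound

theorem exists_lipschitzOnIntervals_of_mnorm_le (hcd : c < d)
    (hu : HasBVDerivOn (openBox c d a b) u gu σ gs) (hjump : σ {x | ¬ JumpPt u x} = 0)
    (huf : ∀ᵐ x ∂(volume.restrict (openBox c d a b)), u x = horizAffine f x)
    (hO : IsOpen O) (hOab : O ⊆ Ioo a b) (hf : ∀ t ∈ O, ContinuousAt f t) {M : ℝ}
    (hM : ∀ᵐ x ∂(volume.restrict (openBox c d a b)), mnorm (gu x) ≤ M) :
    ∃ L, LipschitzOnIntervals L f O := by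
  have hσ : σ {x ∈ openBox c d a b | x 1 ∈ O} = 0 :=
    measure_mono_null (fun x hx hj =>
      not_continuousAt_of_jumpPt (isOpen_openBox c d a b) hx.1 huf hj (hf _ hx.2)) hjump
  have slice_lipschitz {r : ℝ} (hr : r ∈ Ioo c d) :
      LipschitzOnIntervals M.toNNReal (fun t => r • (f t).1 + (f t).2) O := by
    intro s t hst hI
    rw [dist_comm]
    refine (dist_pi_le_iff (mul_nonneg (NNReal.coe_nonneg _) (sub_nonneg.2 hst))).2 fun i => ?_
    rw [mul_comm]
    exact (abs_horizAffine_sub_le hu huf hO hOab hf hσ hM hr hst hI i).trans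
      (mul_le_mul_of_nonneg_left (Real.le_coe_toNNReal M) (sub_nonneg.2 hst))
  obtain ⟨r₁, hcr₁, hr₁d⟩ := exists_between hcd
  obtain ⟨r₂, hcr₂, hr₂r₁⟩ := exists_between hcr₁
  exact (slice_lipschitz ⟨hcr₁, hr₁d⟩).exists_of_smul_add hr₂r₁.ne'
    (slice_lipschitz ⟨hcr₂, hr₂r₁.trans hr₁d⟩)

end LipschitzProfile

section Gradient

variable {f : ℝ → V2 × V2}

/-- The coefficients `p`, `q` of the Jacobian determinant `x₁ p + q` of `horizAffine f` at height
`t`. -/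
def detCoeffs (f : ℝ → V2 × V2) (t : ℝ) : ℝ × ℝ :=
  (cross (f t).1 (deriv f t).1, cross (f t).1 (deriv f t).2)

theorem locallyLipschitzOn_horizAffine_apply {O : Set ℝ} (hf : LocallyLipschitzOn O f)
    (i : Fin 2) : LocallyLipschitzOn {x | x 1 ∈ O} fun x => horizAffine f x i := by
  intro x hx
  let F (z : V2) : ℝ × V2 × V2 := (z 0, f (z 1))
  let A (p : ℝ × V2 × V2) : ℝ := p.1 * p.2.1 i + p.2.2 i
  have A_contDiff : ContDiff ℝ 1 A := by
    unfold A
    fun_prop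
  have height_continuous : Continuous fun z : V2 => z 1 := continuous_apply 1
  obtain ⟨K, t, ht, hK⟩ := hf hx
  have ht' : {z : V2 | z 1 ∈ t} ∈ 𝓝[{z | z 1 ∈ O}] x :=
    (height_continuous.continuousWithinAt.tendsto_nhdsWithin fun _ hz => hz) ht
  have F_lipschitz : LipschitzOnWith (max 1 (K * 1)) F {z | z 1 ∈ t} :=
    (LipschitzWith.eval 0).lipschitzOnWith.prodMk
      (hK.comp (LipschitzWith.eval 1).lipschitzOnWith fun _ hz => hz)
  have F_tendsto : Tendsto F (𝓝[{z | z 1 ∈ O}] x) (𝓝 (F x)) :=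
    ((continuous_apply 0).continuousWithinAt.tendsto).prodMk_nhds
      ((hf.continuousOn _ hx).tendsto.comp
        (height_continuous.continuousWithinAt.tendsto_nhdsWithin fun _ hz => hz))
  obtain ⟨L, v, hv, hL⟩ := A_contDiff.locallyLipschitz (F x)
  exact ⟨_, _, inter_mem ht' (F_tendsto hv), hL.comp (F_lipschitz.mono inter_subset_left)
    fun _ hz => hz.2⟩

theorem lineDeriv_horizAffine_fst (f : ℝ → V2 × V2) (i : Fin 2) (x : V2) :
    lineDeriv ℝ (fun z => horizAffine f z i) x (Pi.single 0 1) = (f (x 1)).1 i := by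
  simp [lineDeriv, horizAffine]

theorem lineDeriv_horizAffine_snd (i : Fin 2) {x : V2} (hf : DifferentiableAt ℝ f (x 1)) :
    lineDeriv ℝ (fun z => horizAffine f z i) x (Pi.single 1 1) =
      x 0 * (deriv f (x 1)).1 i + (deriv f (x 1)).2 i := by
  have hslope := ((hasDerivAt_pi.1 hf.hasDerivAt.fst) i).const_mul (x 0)
  have hintercept := (hasDerivAt_pi.1 hf.hasDerivAt.snd) i
  have h := (hslope.add hintercept).deriv
  rw [← add_zero (x 1), ← deriv_comp_const_add] at h
  simpa [lineDeriv, horizAffine] using h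

variable {c d a b : ℝ} {u : V2 → V2} {gu : V2 → Mat2} {σ : Measure V2} {gs : V2 → Mat2}

theorem ae_det_gradient_eq (hu : HasBVDerivOn (openBox c d a b) u gu σ gs)
    (huf : ∀ᵐ x ∂(volume.restrict (openBox c d a b)), u x = horizAffine f x)
    {S : Finset ℝ} {L : NNReal} (hf : LipschitzOnIntervals L f (Ioo a b \ S)) :
    ∀ᵐ x ∂(volume.restrict (openBox c d a b)), (gu x).det =
      x 0 * (detCoeffs f (x 1)).1 + (detCoeffs f (x 1)).2 := by
  let Ω := openBox c d a b
  let O := Ioo a b \ (S : Set ℝ)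
  have hO : IsOpen O := isOpen_Ioo.sdiff S.finite_toSet.isClosed
  have hU : IsOpen {x ∈ Ω | x 1 ∈ O} :=
    (isOpen_openBox c d a b).inter (hO.preimage (continuous_apply 1))
  have gradient_eq (i j : Fin 2) : ∀ᵐ x ∂(volume.restrict {x ∈ Ω | x 1 ∈ O}),
      gu x i j = lineDeriv ℝ (fun z => horizAffine f z i) x (Pi.single j 1) :=
    ae_gradient_eq_lineDeriv hu hU (sep_subset _ _)
      ((ae_restrict_of_ae_restrict_of_subset (sep_subset _ _) huf).mono fun x hx => by rw [hx])
      ((locallyLipschitzOn_horizAffine_apply (hf.locallyLipschitzOn hO) i).mono fun _ hx => hx.2) j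
  have height_mapsTo : MapsTo (fun x : V2 => x 1) Ω (Ioo a b) := fun x hx => hx.2
  have height_mem : ∀ᵐ x ∂(volume.restrict Ω), x 1 ∉ (S : Set ℝ) :=
    ae_restrict_comp_apply height_mapsTo
      (ae_restrict_of_ae (measure_eq_zero_iff_ae_notMem.1 (S.finite_toSet.measure_zero volume)))
  have height_differentiable : ∀ᵐ x ∂(volume.restrict Ω), DifferentiableAt ℝ f (x 1) :=
    ae_restrict_comp_apply height_mapsTo
      ((ae_restrict_iff' measurableSet_Ioo).2 hf.ae_differentiableAt)
  have gradient_eq_Ω (i j : Fin 2) := ae_imp_of_ae_restrict (gradient_eq i j)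
  have hΩ := (isOpen_openBox c d a b).measurableSet
  filter_upwards [height_mem, height_differentiable, ae_restrict_mem hΩ,
    ae_restrict_of_ae (gradient_eq_Ω 0 0), ae_restrict_of_ae (gradient_eq_Ω 0 1),
    ae_restrict_of_ae (gradient_eq_Ω 1 0), ae_restrict_of_ae (gradient_eq_Ω 1 1)]
    with x hxS hdiff hx h00 h01 h10 h11
  have hxU : x ∈ {x ∈ Ω | x 1 ∈ O} := ⟨hx, hx.2, hxS⟩
  rw [Matrix.det_fin_two, h00 hxU, h01 hxU, h10 hxU, h11 hxU]
  simp only [lineDeriv_horizAffine_fst, lineDeriv_horizAffine_snd _ hdiff, detCoeffs, cross]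
  ring

end Gradient

section AffineIdentities

theorem ae_ae_of_ae_openBox {c d a b : ℝ} {p : ℝ → ℝ → Prop}
    (h : ∀ᵐ x : V2 ∂(volume.restrict (openBox c d a b)), p (x 0) (x 1)) :
    ∀ᵐ t ∂(volume.restrict (Ioo a b)), ∀ᵐ s ∂(volume.restrict (Ioo c d)), p s t := by
  have hprod : ∀ᵐ z : ℝ × ℝ, z.2 ∈ Ioo c d ∧ z.1 ∈ Ioo a b → p z.2 z.1 :=
    ((volume_preserving_finTwoArrow ℝ).symm.comp
      Measure.measurePreserving_swap).quasiMeasurePreserving.ae (ae_imp_of_ae_restrict h)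
  rw [ae_restrict_iff' measurableSet_Ioo]
  filter_upwards [Measure.ae_ae_of_ae_prod hprod] with t ht htI
  exact (ae_restrict_iff' measurableSet_Ioo).2 (ht.mono fun s hs hsI => hs ⟨hsI, htI⟩)

theorem exists_ne_of_ae {α : Type*} [MeasurableSpace α] {μ : Measure α} [NullSingletonClass μ]
    [(ae μ).NeBot] {p : α → Prop} (h : ∀ᵐ s ∂μ, p s) : ∃ s₁ s₂, s₁ ≠ s₂ ∧ p s₁ ∧ p s₂ := by
  obtain ⟨s₁, h₁⟩ := h.exists
  obtain ⟨s₂, h₂, hne⟩ :=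
    (h.and (measure_eq_zero_iff_ae_notMem.1 (measure_singleton s₁))).exists
  exact ⟨s₁, s₂, Ne.symm hne, h₁, h₂⟩

theorem ae_eq_of_ae_mul_add_eq {c d a b : ℝ} (hcd : c < d) {p q : ℝ → ℝ × ℝ}
    (h : ∀ᵐ x : V2 ∂(volume.restrict (openBox c d a b)),
      x 0 * (p (x 1)).1 + (p (x 1)).2 = x 0 * (q (x 1)).1 + (q (x 1)).2) :
    ∀ᵐ t ∂(volume.restrict (Ioo a b)), p t = q t := by
  have : (ae (volume.restrict (Ioo c d))).NeBot :=
    ae_restrict_neBot.2 (isOpen_Ioo.measure_pos volume (nonempty_Ioo.2 hcd)).ne'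
  filter_upwards [ae_ae_of_ae_openBox
    (p := fun s t => s * (p t).1 + (p t).2 = s * (q t).1 + (q t).2) h] with t ht
  obtain ⟨s₁, s₂, hne, h₁, h₂⟩ := exists_ne_of_ae ht
  exact eq_of_smul_add_eq_smul_add hne h₁ h₂

theorem ae_det_eq_one_iff {c d a b : ℝ} (hcd : c < d) {u : V2 → V2} {gu : V2 → Mat2}
    {σ : Measure V2} {gs : V2 → Mat2} {f : ℝ → V2 × V2}
    (hu : HasBVDerivOn (openBox c d a b) u gu σ gs)
    (huf : ∀ᵐ x ∂(volume.restrict (openBox c d a b)), u x = horizAffine f x)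
    {S : Finset ℝ} {L : NNReal} (hf : LipschitzOnIntervals L f (Ioo a b \ S)) :
    (∀ᵐ x ∂(volume.restrict (openBox c d a b)), (gu x).det = 1) ↔
      ∀ᵐ t ∂(volume.restrict (Ioo a b)), detCoeffs f t = (0, 1) := by
  have hdet := ae_det_gradient_eq hu huf hf
  refine ⟨fun h => ae_eq_of_ae_mul_add_eq (c := c) (d := d) hcd ?_, fun h => ?_⟩
  · filter_upwards [hdet, h] with x hx hx1
    rw [← hx, hx1, mul_zero, zero_add]
  · filter_upwards [hdet, ae_restrict_comp_apply (Ω := openBox c d a b) (fun x hx => hx.2) h]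
      with x hx hcoeffs
    rw [hx, hcoeffs, mul_zero, zero_add]

end AffineIdentities

section PiecewiseRigid

theorem eq_zero_of_dot_eq_zero_of_cross_eq_zero {v w : V2} (hv : dot v v = 1)
    (hdot : dot v w = 0) (hcross : cross v w = 0) : w = 0 := by
  simp only [dot, cross, Fin.sum_univ_two] at hv hdot hcross
  ext i
  fin_cases i
  · change w 0 = 0
    linear_combination -(w 0) * hv + v 0 * hdot - v 1 * hcross
  · change w 1 = 0
    linear_combination -(w 1) * hv + v 1 * hdot + v 0 * hcross

theorem eq_of_mulVec_e1_eq {R Q : Mat2} (hR : R ∈ SO2) (hQ : Q ∈ SO2)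
    (h : R.mulVec e1 = Q.mulVec e1) : R = Q := by
  obtain ⟨hR01, hR11, -⟩ := entries_of_mem_SO2 hR
  obtain ⟨hQ01, hQ11, -⟩ := entries_of_mem_SO2 hQ
  have h0 : R 0 0 = Q 0 0 := by simpa [e1] using congr_fun h 0
  have h1 : R 1 0 = Q 1 0 := by simpa [e1] using congr_fun h 1
  ext i j
  fin_cases i <;> fin_cases j <;> simp [*]

theorem dot_mulVec_mulVec_of_mem_SO2 {R : Mat2} (hR : R ∈ SO2) (v w : V2) :
    dot (R.mulVec v) (R.mulVec w) = dot v w := by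
  change R.mulVec v ⬝ᵥ R.mulVec w = v ⬝ᵥ w
  rw [Matrix.dotProduct_mulVec, Matrix.vecMul_mulVec, mul_eq_one_comm.1 hR.1, Matrix.vecMul_one]

theorem norm_mulVec_e2_le_one_of_mem_SO2 {R : Mat2} (hR : R ∈ SO2) : ‖R.mulVec e2‖ ≤ 1 := by
  refine (pi_norm_le_iff_of_nonneg zero_le_one).2 fun i => ?_
  have h : R.mulVec e2 i = R i 1 := by simp [e2, Matrix.mulVec, dotProduct]
  exact h ▸ abs_entry_le_one_of_mem_SO2 hR i 1

theorem add_dot (v w z : V2) : dot (v + w) z = dot v z + dot w z :=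
  add_dotProduct v w z

theorem vecDeriv_eq_deriv {ψ : ℝ → V2} {t : ℝ} (hψ : DifferentiableAt ℝ ψ t) :
    vecDeriv ψ t = deriv ψ t :=
  (deriv_pi fun i => (differentiableAt_pi.1 hψ) i).symm

theorem hasDerivAt_zero_of_dot_self_eq_one {a : ℝ → V2} {t : ℝ} (ha : DifferentiableAt ℝ a t)
    (hunit : ∀ᶠ s in 𝓝 t, dot (a s) (a s) = 1) (hcross : cross (a t) (deriv a t) = 0) :
    HasDerivAt a 0 t := by
  have hderiv := ha.hasDerivAt
  have dot_deriv : dot (a t) (deriv a t) = 0 := by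
    have h : HasDerivAt (fun s => dot (a s) (a s)) (2 * dot (a t) (deriv a t)) t := by
      have h0 := hasDerivAt_pi.1 hderiv 0
      have h1 := hasDerivAt_pi.1 hderiv 1
      simp only [dot, Fin.sum_univ_two]
      exact ((h0.mul h0).add (h1.mul h1)).congr_deriv (by ring)
    linarith [h.unique ((hasDerivAt_const t (1 : ℝ)).congr_of_eventuallyEq hunit)]
  rwa [eq_zero_of_dot_eq_zero_of_cross_eq_zero hunit.self_of_nhds dot_deriv hcross] at hderiv

variable {a b : ℝ} {R : ℝ → Mat2} {ψ : ℝ → V2} {S : Finset ℝ} {L : NNReal}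

theorem exists_lipschitzOnIntervals_profile (hRSO : ∀ t ∈ Ioo a b, R t ∈ SO2)
    (hR : ConstantOnIntervals R (Ioo a b \ S)) (hψ : LipschitzOnIntervals L ψ (Ioo a b \ S)) :
    ∃ K, LipschitzOnIntervals K (profile R ψ) (Ioo a b \ S) := by
  have h := (hR.comp fun Q => Q.mulVec e1).lipschitzOnIntervals.prodMk
    (hψ.add_smul_constantOnIntervals (K := 1) (hR.comp fun Q => Q.mulVec e2)
      fun t ht => norm_mulVec_e2_le_one_of_mem_SO2 (hRSO t ht.1))
  simp only [add_comm (ψ _)] at h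
  exact ⟨_, h⟩

theorem exists_lipschitzOnIntervals_of_profile (hRSO : ∀ t ∈ Ioo a b, R t ∈ SO2)
    (hR : ConstantOnIntervals R (Ioo a b \ S))
    (hf : LipschitzOnIntervals L (profile R ψ) (Ioo a b \ S)) :
    ∃ K, LipschitzOnIntervals K ψ (Ioo a b \ S) := by
  have h := (hf.comp_lipschitzWith LipschitzWith.prod_snd).add_smul_constantOnIntervals (K := 1)
    (hR.comp fun Q => -Q.mulVec e2)
    fun t ht => (norm_neg _).trans_le (norm_mulVec_e2_le_one_of_mem_SO2 (hRSO t ht.1))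
  simp only [profile, smul_neg, add_neg_cancel_comm] at h
  exact ⟨_, h⟩

theorem constantOnIntervals_of_ae_detCoeffs_profile_fst (hRSO : ∀ t ∈ Ioo a b, R t ∈ SO2)
    (hf : LipschitzOnIntervals L (profile R ψ) (Ioo a b \ S))
    (hcoeffs : ∀ᵐ t ∂(volume.restrict (Ioo a b)), (detCoeffs (profile R ψ) t).1 = 0) :
    ConstantOnIntervals R (Ioo a b \ S) := by
  have deriv_zero : ∀ᵐ t, t ∈ Ioo a b \ (S : Set ℝ) →
      HasDerivAt (fun t => (R t).mulVec e1) 0 t := by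
    filter_upwards [ae_imp_of_ae_restrict hcoeffs, hf.ae_differentiableAt] with t ht hdiff hmem
    have hunit : ∀ᶠ s in 𝓝 t, dot ((R s).mulVec e1) ((R s).mulVec e1) = 1 := by
      filter_upwards [isOpen_Ioo.mem_nhds hmem.1] with s hs
        using (dot_mulVec_mulVec_of_mem_SO2 (hRSO s hs) e1 e1).trans (by simp [dot, e1])
    have hderiv : HasDerivAt (fun t => (R t).mulVec e1) (deriv (profile R ψ) t).1 t :=
      (hdiff hmem.1).hasDerivAt.fst
    refine hasDerivAt_zero_of_dot_self_eq_one hderiv.differentiableAt hunit ?_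
    rw [hderiv.deriv]
    exact ht hmem.1
  have constant_Re1 := (hf.comp_lipschitzWith
    LipschitzWith.prod_fst).constantOnIntervals_of_ae_hasDerivAt_zero deriv_zero
  intro s t hst hU
  exact eq_of_mulVec_e1_eq (hRSO s (hU (left_mem_Icc.2 hst)).1)
    (hRSO t (hU (right_mem_Icc.2 hst)).1) (constant_Re1 s t hst hU)

theorem detCoeffs_profile {t : ℝ} (hRt : R t ∈ SO2) (hR : R =ᶠ[𝓝 t] fun _ => R t)
    (hψ : DifferentiableAt ℝ ψ t) :
    detCoeffs (profile R ψ) t = (0, 1 + dot (vecDeriv ψ t) ((R t).mulVec e2)) := by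
  have hslope : HasDerivAt (fun s => (R s).mulVec e1) 0 t :=
    (hasDerivAt_const t _).congr_of_eventuallyEq (hR.fun_comp fun Q => Q.mulVec e1)
  have hintercept : HasDerivAt (fun s => s • (R s).mulVec e2 + ψ s)
      ((R t).mulVec e2 + vecDeriv ψ t) t := by
    have h := ((hasDerivAt_id t).smul_const ((R t).mulVec e2)).add hψ.hasDerivAt
    rw [one_smul, ← vecDeriv_eq_deriv hψ] at h
    refine h.congr_of_eventuallyEq (hR.mono fun s hs => ?_)
    simp [hs]
  have hprofile := (hslope.prodMk hintercept).deriv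
  rw [detCoeffs, show deriv (profile R ψ) t = _ from hprofile]
  simp only [profile, cross_mulVec_e1_of_mem_SO2 hRt, add_dot, dot_mulVec_mulVec_of_mem_SO2 hRt]
  simp [dot, e2]

theorem ae_detCoeffs_profile_eq_iff (hRSO : ∀ t ∈ Ioo a b, R t ∈ SO2)
    (hR : ConstantOnIntervals R (Ioo a b \ S)) (hψ : LipschitzOnIntervals L ψ (Ioo a b \ S)) :
    (∀ᵐ t ∂(volume.restrict (Ioo a b)), detCoeffs (profile R ψ) t = (0, 1)) ↔
      ∀ᵐ t ∂(volume.restrict (Ioo a b)), dot (vecDeriv ψ t) ((R t).mulVec e2) = 0 := by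
  refine Filter.eventually_congr ?_
  rw [ae_restrict_iff' measurableSet_Ioo]
  filter_upwards [hψ.ae_differentiableAt,
    measure_eq_zero_iff_ae_notMem.1 (S.finite_toSet.measure_zero volume)] with t hdiff hS ht
  rw [detCoeffs_profile (hRSO t ht) (hR.eventuallyEq
    (isOpen_Ioo.sdiff S.finite_toSet.isClosed) ⟨ht, hS⟩) (hdiff ht)]
  simp

end PiecewiseRigid

section Characterization

variable {c d a b : ℝ} {u : V2 → V2}

theorem exists_finset_lipschitzOnIntervals_of_memSBVinf (hcd : c < d)
    (hu : memSBVinf (openBox c d a b) u) {f : ℝ → V2 × V2} (hf : CadlagOn f (Ioo a b))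
    (huf : ∀ᵐ x ∂(volume.restrict (openBox c d a b)), u x = horizAffine f x) :
    ∃ T : Finset ℝ, jumpSet (openBox c d a b) u ⊆ {x | x 1 ∈ T} ∧
      ∃ L, LipschitzOnIntervals L f (Ioo a b \ T) := by
  obtain ⟨gu, σ, gs, hgu, hjump, ⟨M, hM⟩, hfinite⟩ := hu
  have hT := finite_discontinuities hcd hf huf hfinite
  refine ⟨hT.toFinset, fun x hx => hT.mem_toFinset.2 ⟨hx.1.2,
    not_continuousAt_of_jumpPt (isOpen_openBox c d a b) hx.1 huf hx.2⟩,
    exists_lipschitzOnIntervals_of_mnorm_le hcd hgu hjump huf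
      (isOpen_Ioo.sdiff hT.toFinset.finite_toSet.isClosed) sdiff_subset (fun t ht => ?_) hM⟩
  by_contra hdisc
  exact ht.2 (hT.mem_toFinset.2 ⟨ht.1, hdisc⟩)

theorem exists_cadlag_profile {R : ℝ → Mat2} {ψ : ℝ → V2} (hRSO : ∀ t ∈ Ioo a b, R t ∈ SO2)
    (hR : BVm R (Ioo a b)) (hψ : BVv ψ (Ioo a b))
    (hu : ∀ᵐ x ∂(volume.restrict (openBox c d a b)), u x = (R (x 1)).mulVec x + ψ (x 1)) :
    ∃ Q φ, (∀ t ∈ Ioo a b, Q t ∈ SO2) ∧ CadlagOn (profile Q φ) (Ioo a b) ∧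
      ∀ᵐ x ∂(volume.restrict (openBox c d a b)), u x = horizAffine (profile Q φ) x := by
  obtain ⟨Q, hQ, hQSO, hQR⟩ := exists_cadlagOn_SO2_ae_eq isOpen_Ioo hR hRSO
  obtain ⟨φ, hφ, hφψ⟩ := exists_cadlagOn_V2_ae_eq isOpen_Ioo hψ
  have height_mapsTo : MapsTo (fun x : V2 => x 1) (openBox c d a b) (Ioo a b) := fun x hx => hx.2
  refine ⟨Q, φ, hQSO, cadlagOn_profile hQ hφ, ?_⟩
  filter_upwards [hu, ae_restrict_comp_apply height_mapsTo hQR,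
    ae_restrict_comp_apply height_mapsTo hφψ] with x hx hxR hxψ
  rw [hx, horizAffine_profile, hxR, hxψ]

theorem exists_cadlag_lipschitz_profile (hcd : c < d) (hA : memAOn (openBox c d a b) a b u)
    (hu : memSBVinf (openBox c d a b) u) :
    ∃ R ψ, ∃ T : Finset ℝ, (∀ t ∈ Ioo a b, R t ∈ SO2) ∧
      (∀ᵐ x ∂(volume.restrict (openBox c d a b)), u x = horizAffine (profile R ψ) x) ∧
      (∃ L, LipschitzOnIntervals L (profile R ψ) (Ioo a b \ T)) ∧
      jumpSet (openBox c d a b) u ⊆ {x | x 1 ∈ T} := by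
  obtain ⟨-, -, -, -, ⟨R, ψ, hRSO, hR, hψ, huR⟩, -⟩ := hA
  obtain ⟨Q, φ, hQSO, hcadlag, huQ⟩ := exists_cadlag_profile hRSO hR hψ huR
  obtain ⟨T, hJ, hL⟩ := exists_finset_lipschitzOnIntervals_of_memSBVinf hcd hu hcadlag huQ
  exact ⟨Q, φ, T, hQSO, huQ, hL, hJ⟩

theorem charA_SBVinf_Rect_general (hcd : c < d) (u : V2 → V2) :
    ((memAOn (openBox c d a b) a b u ∧ memSBVinf (openBox c d a b) u) ↔
      (memSBVinf (openBox c d a b) u ∧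
        ∃ R : ℝ → Mat2, ∃ ψ : ℝ → V2,
          (∀ t ∈ Ioo a b, R t ∈ SO2) ∧ PCOn a b R ∧ PLipOn a b ψ ∧
          (∀ᵐ x ∂(volume.restrict (openBox c d a b)), u x = (R (x 1)).mulVec x + ψ (x 1)) ∧
          (∀ᵐ t ∂(volume.restrict (Ioo a b)), dot (vecDeriv ψ t) ((R t).mulVec e2) = 0))) ∧
    ((memAOn (openBox c d a b) a b u ∧ memSBVinf (openBox c d a b) u) →
      ∃ F : Finset ℝ, jumpSet (openBox c d a b) u ⊆ {x : V2 | x 1 ∈ F}) := by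
  refine ⟨⟨fun ⟨hA, hu⟩ => ⟨hu, ?_⟩, fun ⟨hu, R, ψ, hRSO, hR, hψ, huR, hslip⟩ => ⟨?_, hu⟩⟩,
    fun ⟨hA, hu⟩ => ?_⟩
  · obtain ⟨R, ψ, T, hRSO, huR, ⟨L, hL⟩, -⟩ := exists_cadlag_lipschitz_profile hcd hA hu
    obtain ⟨gu, σ, gs, hgu, -, hdet⟩ := hA
    have hcoeffs := (ae_det_eq_one_iff hcd hgu huR hL).1 hdet
    have hR := constantOnIntervals_of_ae_detCoeffs_profile_fst hRSO hL
      (hcoeffs.mono fun t ht => by rw [ht])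
    obtain ⟨K, hψ⟩ := exists_lipschitzOnIntervals_of_profile hRSO hR hL
    exact ⟨R, ψ, hRSO, pcOn_iff.2 ⟨T, hR⟩, pLipOn_iff.2 ⟨T, K, hψ⟩,
      huR.mono fun x hx => hx.trans (horizAffine_profile R ψ x),
      (ae_detCoeffs_profile_eq_iff hRSO hR hψ).1 hcoeffs⟩
  · obtain ⟨gu, σ, gs, hgu, -⟩ := hu
    obtain ⟨S₁, hS₁⟩ := pcOn_iff.1 hR
    obtain ⟨S₂, K, hS₂⟩ := pLipOn_iff.1 hψ
    replace hS₁ : ConstantOnIntervals R (Ioo a b \ ↑(S₁ ∪ S₂)) := hS₁.mono (by grind)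
    replace hS₂ : LipschitzOnIntervals K ψ (Ioo a b \ ↑(S₁ ∪ S₂)) := hS₂.mono (by grind)
    obtain ⟨L, hL⟩ := exists_lipschitzOnIntervals_profile hRSO hS₁ hS₂
    refine ⟨gu, σ, gs, hgu, ⟨R, ψ, hRSO, bvm_of_pcOn hR, bvv_of_pLipOn hψ, huR⟩, ?_⟩
    exact (ae_det_eq_one_iff hcd hgu (huR.mono fun x hx => hx.trans
      (horizAffine_profile R ψ x).symm) hL).2
      ((ae_detCoeffs_profile_eq_iff hRSO hS₁ hS₂).2 hslip)
  · obtain ⟨-, -, T, -, -, -, hJ⟩ := exists_cadlag_lipschitz_profile hcd hA hu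
    exact ⟨T, hJ⟩

end Characterization

/-- Remark 4.1(c): characterization of `A ∩ SBV_∞(Ω;ℝ²)` on
`Ω = (0,1) × (−1,1)`: `A ∩ SBV_∞` consists of the `SBV_∞` maps `u(x) = R(x₂)x + ψ(x₂)` with
`R ∈ PC(−1,1;SO(2))`, `ψ ∈ SBV_∞(−1,1;ℝ²)` (piecewise Lipschitz with finitely many jumps)
and `ψ'·Re₂ = 0` a.e.; in particular the jump set `J_u` of such `u` is contained in a finite
union of horizontal segments. -/
theorem charA_SBVinf_Rect :
    ∀ u : V2 → V2,
      ((memAOn Rect (-1) 1 u ∧ memSBVinf Rect u) ↔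
        (memSBVinf Rect u ∧
          ∃ R : ℝ → Mat2, ∃ ψ : ℝ → V2,
            (∀ t ∈ Ioo (-1:ℝ) 1, R t ∈ SO2) ∧ PCOn (-1) 1 R ∧ PLipOn (-1) 1 ψ ∧
            (∀ᵐ x ∂(volume.restrict Rect), u x = (R (x 1)).mulVec x + ψ (x 1)) ∧
            (∀ᵐ t ∂(volume.restrict (Ioo (-1:ℝ) 1)),
              dot (vecDeriv ψ t) ((R t).mulVec e2) = 0))) ∧
      ((memAOn Rect (-1) 1 u ∧ memSBVinf Rect u) →
        ∃ F : Finset ℝ, jumpSet Rect u ⊆ {x : V2 | x 1 ∈ F}) :=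
  fun u => charA_SBVinf_Rect_general zero_lt_one u

end
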